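/- (Uniqueness of spherical convex polytopes, planar form; Theorem 1.7(ii).) Let N ≥ 3 be an integer, q₁, …, q_N distinct points of ℝ², α₁, …, α_N ∈ (−1, 0) with Σ_{j=1}^N α_j > −2, and set ρ = 4π(2 + Σ_j α_j). Suppose for i = 1, 2 that u_i : ℝ² ∖ {q₁, …, q_N} → ℝ is C² and satisfies: Δu_i(x) + e^{u_i(x)} = 0 for all x ∈ ℝ² ∖ {q₁, …, q_N}; for each j the function x ↦ u_i(x) − 2α_j ln|x − q_j| extends continuously to q_j; ∫_{ℝ²} e^{u_i(x)} dx = ρ; and u_i(x) + 2 ln(1 + |x|²) converges to a finite limit as |x| → ∞. Then u₁ = u₂ on ℝ² ∖ {q₁, …, q_N}. -/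

import Mathlib

open Real MeasureTheory Metric Filter Topology RealInnerProductSpace

noncomputable section

/-- The plane `ℝ²`. -/
abbrev Pl := EuclideanSpace ℝ (Fin 2)

/-- The Laplacian `Δu = ∂²u/∂x₁² + ∂²u/∂x₂²` of a function on `ℝ²`. -/
def lap (u : Pl → ℝ) (x : Pl) : ℝ :=
  ∑ i : Fin 2, fderiv ℝ (fun y => fderiv ℝ u y (EuclideanSpace.single i 1)) x
    (EuclideanSpace.single i 1)

/-- `u` is a solution of the planar form of the constant curvature equation on the
sphere with `N` conical singularities of orders `al j` (spherical convex polytope)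
and total mass `RHO = 4 pi (2 + sum al)`. -/
def PolySol (N : ℕ) (q : Fin N → Pl) (al : Fin N → ℝ) (ρ : ℝ) (u : Pl → ℝ) : Prop :=
  ContDiffOn ℝ 2 u (Set.range q)ᶜ ∧
  (∀ x ∉ Set.range q, lap u x + Real.exp (u x) = 0) ∧
  (∀ j, ∃ L : ℝ, Tendsto (fun x => u x - 2 * al j * Real.log ‖x - q j‖)
      (𝓝[(Set.range q)ᶜ] (q j)) (nhds L)) ∧
  (∫ x : Pl, Real.exp (u x) = ρ) ∧
  (∃ L : ℝ, Tendsto (fun x => u x + 2 * Real.log (1 + ‖x‖ ^ 2))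
      (Bornology.cobounded Pl) (nhds L))

/-! ### Wirtinger derivatives -/

/-- The Wirtinger derivative `∂/∂z`. -/
def dz (f : ℂ → ℂ) (z : ℂ) : ℂ := (fderiv ℝ f z 1 - Complex.I * fderiv ℝ f z Complex.I) / 2

/-- The Wirtinger derivative `∂/∂(conj z)`. -/
def db (f : ℂ → ℂ) (z : ℂ) : ℂ := (fderiv ℝ f z 1 + Complex.I * fderiv ℝ f z Complex.I) / 2

lemma fderiv_eq_dz_db (f : ℂ → ℂ) (z h : ℂ) :
    fderiv ℝ f z h = dz f z * h + db f z * (starRingEnd ℂ) h := by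
  have h1 : h = h.re • (1 : ℂ) + h.im • Complex.I := by
    apply Complex.ext <;> simp
  have h2 : fderiv ℝ f z h = h.re * fderiv ℝ f z 1 + h.im * fderiv ℝ f z Complex.I := by
    conv_lhs => rw [h1, map_add, map_smul, map_smul]
    simp
  have h3 : h = h.re + h.im * Complex.I := (Complex.re_add_im h).symm
  have h4 : (starRingEnd ℂ) h = h.re - h.im * Complex.I := by
    apply Complex.ext <;> simp
  rw [h2, h4, dz, db]
  conv_rhs => rw [h3]
  simp only [Complex.add_re, Complex.ofReal_re, Complex.mul_re, Complex.I_re, Complex.I_im,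
    Complex.add_im, Complex.ofReal_im, Complex.mul_im, mul_zero, mul_one, zero_add, add_zero,
    sub_zero]
  linear_combination (h.im * fderiv ℝ f z Complex.I) * Complex.I_sq

lemma norm_db_le (f : ℂ → ℂ) (z : ℂ) : ‖db f z‖ ≤ ‖fderiv ℝ f z‖ := by
  have h1 := (fderiv ℝ f z).le_opNorm 1
  have h2 := (fderiv ℝ f z).le_opNorm Complex.I
  simp only [norm_one, Complex.norm_I, mul_one] at h1 h2
  rw [db, norm_div]
  have := norm_add_le (fderiv ℝ f z 1) (Complex.I * fderiv ℝ f z Complex.I)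
  rw [norm_mul, Complex.norm_I, one_mul] at this
  simp only [Complex.norm_ofNat]
  linarith

lemma norm_dz_le (f : ℂ → ℂ) (z : ℂ) : ‖dz f z‖ ≤ ‖fderiv ℝ f z‖ := by
  have h1 := (fderiv ℝ f z).le_opNorm 1
  have h2 := (fderiv ℝ f z).le_opNorm Complex.I
  simp only [norm_one, Complex.norm_I, mul_one] at h1 h2
  rw [dz, norm_div]
  have := norm_sub_le (fderiv ℝ f z 1) (Complex.I * fderiv ℝ f z Complex.I)
  rw [norm_mul, Complex.norm_I, one_mul] at this
  simp only [Complex.norm_ofNat]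
  linarith

lemma db_congr {f g : ℂ → ℂ} {z : ℂ} (h : f =ᶠ[𝓝 z] g) : db f z = db g z := by
  simp only [db, h.fderiv_eq]

lemma dz_congr {f g : ℂ → ℂ} {z : ℂ} (h : f =ᶠ[𝓝 z] g) : dz f z = dz g z := by
  simp only [dz, h.fderiv_eq]

lemma db_add {f g : ℂ → ℂ} {z : ℂ} (hf : DifferentiableAt ℝ f z) (hg : DifferentiableAt ℝ g z) :
    db (fun x => f x + g x) z = db f z + db g z := by
  simp only [db, fderiv_fun_add hf hg, add_apply]; ring

lemma dz_add {f g : ℂ → ℂ} {z : ℂ} (hf : DifferentiableAt ℝ f z) (hg : DifferentiableAt ℝ g z) :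
    dz (fun x => f x + g x) z = dz f z + dz g z := by
  simp only [dz, fderiv_fun_add hf hg, add_apply]; ring

lemma db_sub {f g : ℂ → ℂ} {z : ℂ} (hf : DifferentiableAt ℝ f z) (hg : DifferentiableAt ℝ g z) :
    db (fun x => f x - g x) z = db f z - db g z := by
  simp only [db, fderiv_fun_sub hf hg, sub_apply]; ring

lemma dz_sub {f g : ℂ → ℂ} {z : ℂ} (hf : DifferentiableAt ℝ f z) (hg : DifferentiableAt ℝ g z) :
    dz (fun x => f x - g x) z = dz f z - dz g z := by
  simp only [dz, fderiv_fun_sub hf hg, sub_apply]; ring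

lemma db_mul {f g : ℂ → ℂ} {z : ℂ} (hf : DifferentiableAt ℝ f z) (hg : DifferentiableAt ℝ g z) :
    db (fun x => f x * g x) z = db f z * g z + f z * db g z := by
  simp only [db, fderiv_fun_mul hf hg, add_apply,
    smul_apply, smul_eq_mul]
  ring

lemma dz_mul {f g : ℂ → ℂ} {z : ℂ} (hf : DifferentiableAt ℝ f z) (hg : DifferentiableAt ℝ g z) :
    dz (fun x => f x * g x) z = dz f z * g z + f z * dz g z := by
  simp only [dz, fderiv_fun_mul hf hg, add_apply,
    smul_apply, smul_eq_mul]
  ring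

lemma db_const (c z : ℂ) : db (fun _ => c) z = 0 := by simp [db]

lemma dz_const (c z : ℂ) : dz (fun _ => c) z = 0 := by simp [dz]

lemma db_const_mul {f : ℂ → ℂ} {z : ℂ} (c : ℂ) (hf : DifferentiableAt ℝ f z) :
    db (fun x => c * f x) z = c * db f z := by
  rw [db_mul (differentiableAt_const c) hf, db_const]; ring

lemma dz_const_mul {f : ℂ → ℂ} {z : ℂ} (c : ℂ) (hf : DifferentiableAt ℝ f z) :
    dz (fun x => c * f x) z = c * dz f z := by
  rw [dz_mul (differentiableAt_const c) hf, dz_const]; ring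

/-- Chain rule with an outer holomorphic function. -/
lemma fderiv_hol_comp {g f : ℂ → ℂ} {z g' : ℂ} (hg : HasDerivAt g g' (f z))
    (hf : DifferentiableAt ℝ f z) (h : ℂ) :
    fderiv ℝ (fun x => g (f x)) z h = g' * fderiv ℝ f z h := by
  have h1 : HasFDerivAt g (g' • (1 : ℂ →L[ℝ] ℂ)) (f z) := hg.complexToReal_fderiv
  have h2 := h1.comp z hf.hasFDerivAt
  rw [show (fun x => g (f x)) = g ∘ f from rfl, h2.fderiv]
  simp

lemma db_hol_comp {g f : ℂ → ℂ} {z g' : ℂ} (hg : HasDerivAt g g' (f z))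
    (hf : DifferentiableAt ℝ f z) : db (fun x => g (f x)) z = g' * db f z := by
  simp only [db, fderiv_hol_comp hg hf]; ring

lemma dz_hol_comp {g f : ℂ → ℂ} {z g' : ℂ} (hg : HasDerivAt g g' (f z))
    (hf : DifferentiableAt ℝ f z) : dz (fun x => g (f x)) z = g' * dz f z := by
  simp only [dz, fderiv_hol_comp hg hf]; ring

/-- Chain rule with an inner holomorphic function. -/
lemma fderiv_comp_hol {f φ : ℂ → ℂ} {z φ' : ℂ} (hφ : HasDerivAt φ φ' z)
    (hf : DifferentiableAt ℝ f (φ z)) (h : ℂ) :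
    fderiv ℝ (fun x => f (φ x)) z h = fderiv ℝ f (φ z) (φ' * h) := by
  have h1 : HasFDerivAt φ (φ' • (1 : ℂ →L[ℝ] ℂ)) z := hφ.complexToReal_fderiv
  have h2 := hf.hasFDerivAt.comp z h1
  rw [show (fun x => f (φ x)) = f ∘ φ from rfl, h2.fderiv]
  simp

lemma db_comp_hol {f φ : ℂ → ℂ} {z φ' : ℂ} (hφ : HasDerivAt φ φ' z)
    (hf : DifferentiableAt ℝ f (φ z)) :
    db (fun x => f (φ x)) z = (starRingEnd ℂ) φ' * db f (φ z) := by
  rw [db, fderiv_comp_hol hφ hf, fderiv_comp_hol hφ hf, fderiv_eq_dz_db, fderiv_eq_dz_db]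
  simp only [mul_one, map_mul, Complex.conj_I]
  linear_combination (dz f (φ z) * φ' / 2 - db f (φ z) * (starRingEnd ℂ) φ' / 2) * Complex.I_sq

lemma dz_comp_hol {f φ : ℂ → ℂ} {z φ' : ℂ} (hφ : HasDerivAt φ φ' z)
    (hf : DifferentiableAt ℝ f (φ z)) :
    dz (fun x => f (φ x)) z = φ' * dz f (φ z) := by
  rw [dz, fderiv_comp_hol hφ hf, fderiv_comp_hol hφ hf, fderiv_eq_dz_db, fderiv_eq_dz_db]
  simp only [mul_one, map_mul, Complex.conj_I]
  linear_combination (-dz f (φ z) * φ' / 2 + db f (φ z) * (starRingEnd ℂ) φ' / 2) * Complex.I_sq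

lemma db_of_hol {f : ℂ → ℂ} {z : ℂ} (hf : DifferentiableAt ℂ f z) : db f z = 0 := by
  have := (differentiableAt_complex_iff_differentiableAt_real.1 hf).2
  rw [db, this, smul_eq_mul]
  linear_combination (fderiv ℝ f z 1 / 2) * Complex.I_sq

lemma hol_of_db {f : ℂ → ℂ} {z : ℂ} (hf : DifferentiableAt ℝ f z) (h : db f z = 0) :
    DifferentiableAt ℂ f z := by
  refine differentiableAt_complex_iff_differentiableAt_real.2 ⟨hf, ?_⟩
  rw [db] at h
  rw [smul_eq_mul]
  linear_combination (-2 * Complex.I) * h + (fderiv ℝ f z Complex.I) * Complex.I_sq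

lemma dz_of_hol {f : ℂ → ℂ} {z f' : ℂ} (hf : HasDerivAt f f' z) : dz f z = f' := by
  have h1 : HasFDerivAt f (f' • (1 : ℂ →L[ℝ] ℂ)) z := hf.complexToReal_fderiv
  rw [dz, h1.fderiv]
  simp
  linear_combination (-f' / 2) * Complex.I_sq

lemma db_conj {f : ℂ → ℂ} {z : ℂ} (hf : DifferentiableAt ℝ f z) :
    db (fun x => (starRingEnd ℂ) (f x)) z = (starRingEnd ℂ) (dz f z) := by
  have h2 : HasFDerivAt (fun x => (starRingEnd ℂ) (f x))
      ((Complex.conjCLE : ℂ →L[ℝ] ℂ).comp (fderiv ℝ f z)) z :=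
    (Complex.conjCLE : ℂ →L[ℝ] ℂ).hasFDerivAt.comp z hf.hasFDerivAt
  rw [db, h2.fderiv, dz]
  simp only [map_div₀, Complex.conj_ofNat]
  simp

lemma contDiffAt_db {f : ℂ → ℂ} {z : ℂ} {n m : WithTop ℕ∞} (hf : ContDiffAt ℝ n f z)
    (h : m + 1 ≤ n) : ContDiffAt ℝ m (db f) z := by
  have h1 : ContDiffAt ℝ m (fderiv ℝ f) z := hf.fderiv_right h
  have h2 := h1.clm_apply (contDiffAt_const (c := (1 : ℂ)))
  have h3 := h1.clm_apply (contDiffAt_const (c := Complex.I))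
  exact (h2.add (contDiffAt_const.mul h3)).div_const 2

lemma contDiffAt_dz {f : ℂ → ℂ} {z : ℂ} {n m : WithTop ℕ∞} (hf : ContDiffAt ℝ n f z)
    (h : m + 1 ≤ n) : ContDiffAt ℝ m (dz f) z := by
  have h1 : ContDiffAt ℝ m (fderiv ℝ f) z := hf.fderiv_right h
  have h2 := h1.clm_apply (contDiffAt_const (c := (1 : ℂ)))
  have h3 := h1.clm_apply (contDiffAt_const (c := Complex.I))
  exact (h2.sub (contDiffAt_const.mul h3)).div_const 2

lemma fderiv_fderiv_apply {f : ℂ → ℂ} {z : ℂ} (hf : ContDiffAt ℝ 2 f z) (a b : ℂ) :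
    fderiv ℝ (fun y => fderiv ℝ f y a) z b = fderiv ℝ (fderiv ℝ f) z b a := by
  have h1 : ContDiffAt ℝ 1 (fderiv ℝ f) z := hf.fderiv_right (by norm_num)
  have h2 := h1.differentiableAt (by norm_num)
  rw [fderiv_clm_apply h2 (differentiableAt_const a)]
  simp

lemma fderiv_dz_apply {f : ℂ → ℂ} {z : ℂ} (hf : ContDiffAt ℝ 2 f z) (b : ℂ) :
    fderiv ℝ (dz f) z b = (fderiv ℝ (fderiv ℝ f) z b 1
      - Complex.I * fderiv ℝ (fderiv ℝ f) z b Complex.I) / 2 := by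
  have h1 : ContDiffAt ℝ 1 (fderiv ℝ f) z := hf.fderiv_right (by norm_num)
  have h2 := h1.differentiableAt (by norm_num)
  have ha : ∀ a : ℂ, HasFDerivAt (fun y => fderiv ℝ f y a)
      (fderiv ℝ (fun y => fderiv ℝ f y a) z) z := fun a =>
    (h2.clm_apply (differentiableAt_const a)).hasFDerivAt
  have h3 := ((ha 1).sub ((ha Complex.I).const_mul Complex.I)).mul_const (2⁻¹ : ℂ)
  have h4 : dz f = fun y => (fderiv ℝ f y 1 - Complex.I * fderiv ℝ f y Complex.I) * 2⁻¹ := by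
    funext y; rw [dz, div_eq_mul_inv]
  rw [h4]
  erw [h3.fderiv]
  rw [← fderiv_fderiv_apply hf, ← fderiv_fderiv_apply hf]
  simp
  ring

lemma fderiv_db_apply {f : ℂ → ℂ} {z : ℂ} (hf : ContDiffAt ℝ 2 f z) (b : ℂ) :
    fderiv ℝ (db f) z b = (fderiv ℝ (fderiv ℝ f) z b 1
      + Complex.I * fderiv ℝ (fderiv ℝ f) z b Complex.I) / 2 := by
  have h1 : ContDiffAt ℝ 1 (fderiv ℝ f) z := hf.fderiv_right (by norm_num)
  have h2 := h1.differentiableAt (by norm_num)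
  have ha : ∀ a : ℂ, HasFDerivAt (fun y => fderiv ℝ f y a)
      (fderiv ℝ (fun y => fderiv ℝ f y a) z) z := fun a =>
    (h2.clm_apply (differentiableAt_const a)).hasFDerivAt
  have h3 := ((ha 1).add ((ha Complex.I).const_mul Complex.I)).mul_const (2⁻¹ : ℂ)
  have h4 : db f = fun y => (fderiv ℝ f y 1 + Complex.I * fderiv ℝ f y Complex.I) * 2⁻¹ := by
    funext y; rw [db, div_eq_mul_inv]
  rw [h4]
  erw [h3.fderiv]
  rw [← fderiv_fderiv_apply hf, ← fderiv_fderiv_apply hf]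
  simp
  ring

lemma db_dz_comm {f : ℂ → ℂ} {z : ℂ} (hf : ContDiffAt ℝ 2 f z) :
    db (dz f) z = dz (db f) z := by
  have hs : IsSymmSndFDerivAt ℝ f z := hf.isSymmSndFDerivAt (by simp)
  rw [db, dz, fderiv_dz_apply hf, fderiv_dz_apply hf, fderiv_db_apply hf, fderiv_db_apply hf,
    hs.eq 1 Complex.I]
  ring

lemma db_dz_eq_lap {f : ℂ → ℂ} {z : ℂ} (hf : ContDiffAt ℝ 2 f z) :
    db (dz f) z = (fderiv ℝ (fun y => fderiv ℝ f y 1) z 1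
      + fderiv ℝ (fun y => fderiv ℝ f y Complex.I) z Complex.I) / 4 := by
  have hs : IsSymmSndFDerivAt ℝ f z := hf.isSymmSndFDerivAt (by simp)
  rw [fderiv_fderiv_apply hf, fderiv_fderiv_apply hf, db, fderiv_dz_apply hf, fderiv_dz_apply hf,
    hs.eq 1 Complex.I]
  linear_combination (-(fderiv ℝ (fderiv ℝ f) z Complex.I Complex.I) / 4) * Complex.I_sq

/-! ### The Cauchy-Pompeiu formula -/

/-- unit vector of angle `t`. -/
def uv (t : ℝ) : ℂ := (Real.cos t : ℂ) + (Real.sin t : ℂ) * Complex.I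

lemma uv_cont : Continuous uv := by unfold uv; fun_prop

lemma uv_norm (t : ℝ) : ‖uv t‖ = 1 := by
  rw [uv, Complex.ofReal_cos, Complex.ofReal_sin]
  exact Complex.norm_cos_add_sin_mul_I t

lemma uv_deriv (t : ℝ) : HasDerivAt uv (Complex.I * uv t) t := by
  have h1 : HasDerivAt (fun t : ℝ => (Real.cos t : ℂ)) ((-Real.sin t : ℝ) : ℂ) t :=
    (Real.hasDerivAt_cos t).ofReal_comp
  have h2 : HasDerivAt (fun t : ℝ => (Real.sin t : ℂ)) ((Real.cos t : ℝ) : ℂ) t :=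
    (Real.hasDerivAt_sin t).ofReal_comp
  have h3 := h1.add (h2.mul_const Complex.I)
  refine h3.congr_deriv ?_
  rw [uv]; push_cast
  linear_combination (-Complex.sin t) * Complex.I_sq

lemma pompeiu_polar_integrable {A : ℝ × ℝ → ℂ} (hA : Continuous A) {R : ℝ}
    (hR : ∀ p : ℝ × ℝ, R < p.1 → A p = 0) :
    IntegrableOn A (Set.Ioi (0 : ℝ) ×ˢ Set.Ioo (-π) π) := by
  have h1 : IntegrableOn A (Set.Icc (0 : ℝ) R ×ˢ Set.Icc (-π) π) :=
    hA.continuousOn.integrableOn_compact (isCompact_Icc.prod isCompact_Icc)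
  refine h1.of_forall_sdiff_eq_zero (measurableSet_Ioi.prod measurableSet_Ioo) ?_
  rintro ⟨r, t⟩ ⟨⟨hr, ht⟩, hn⟩
  apply hR
  by_contra hcon
  apply hn
  simp only [Set.mem_Ioi, Set.mem_Ioo] at hr ht
  exact ⟨⟨hr.le, not_lt.1 hcon⟩, ⟨ht.1.le, ht.2.le⟩⟩

lemma pompeiu_zero {φ : ℂ → ℂ} (hφ : ContDiff ℝ 1 φ) (hc : HasCompactSupport φ) :
    ∫ ζ, db φ ζ * ζ⁻¹ = -π * φ 0 := by
  have hd : Continuous (fderiv ℝ φ) := hφ.continuous_fderiv (by norm_num)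
  have hdiff : Differentiable ℝ φ := hφ.differentiable (by norm_num)
  obtain ⟨R, hRpos, hR⟩ := hc.isCompact.isBounded.exists_pos_norm_le
  have hz : ∀ z : ℂ, R < ‖z‖ → φ z = 0 := by
    intro z hz
    apply image_eq_zero_of_notMem_tsupport
    intro h
    exact absurd (hR z h) (not_le.2 hz)
  have hdz : ∀ z : ℂ, R < ‖z‖ → fderiv ℝ φ z = 0 := by
    intro z hz
    apply image_eq_zero_of_notMem_tsupport
    intro h
    exact absurd (hR z (tsupport_fderiv_subset ℝ h)) (not_le.2 hz)
  have hn : ∀ r t : ℝ, R < r → R < ‖(r : ℂ) * uv t‖ := by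
    intro r t h
    rw [norm_mul, uv_norm, mul_one, Complex.norm_real]
    exact h.trans_le (le_abs_self r)
  set A : ℝ × ℝ → ℂ := fun p => fderiv ℝ φ (p.1 * uv p.2) (uv p.2) with hA
  set B : ℝ × ℝ → ℂ := fun p => fderiv ℝ φ (p.1 * uv p.2) (Complex.I * uv p.2) with hB
  have huc := uv_cont
  have hAc : Continuous A := by
    apply Continuous.clm_apply
    · exact hd.comp (by fun_prop)
    · fun_prop
  have hBc : Continuous B := by
    apply Continuous.clm_apply
    · exact hd.comp (by fun_prop)
    · fun_prop
  have hAi := pompeiu_polar_integrable (R := R) hAc (fun p hp => by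
    simp only [hA, hdz _ (hn _ _ hp), zero_apply])
  have hBi := pompeiu_polar_integrable (R := R) hBc (fun p hp => by
    simp only [hB, hdz _ (hn _ _ hp), zero_apply])
  -- integral of A
  have hAint : ∫ p in Set.Ioi (0 : ℝ) ×ˢ Set.Ioo (-π) π, A p = -(2 * π) * φ 0 := by
    rw [Measure.volume_eq_prod] at hAi ⊢
    have hswap : IntegrableOn (fun z : ℝ × ℝ => A z.swap) (Set.Ioo (-π) π ×ˢ Set.Ioi (0 : ℝ))
        (volume.prod volume) := hAi.swap
    rw [← setIntegral_prod_swap, setIntegral_prod _ hswap]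
    have : ∀ t : ℝ, ∫ r in Set.Ioi (0 : ℝ), A (r, t) = - φ 0 := by
      intro t
      have h1 : ∀ r : ℝ, HasDerivAt (fun r : ℝ => φ (r * uv t)) (A (r, t)) r := by
        intro r
        have h2 : HasDerivAt (fun r : ℝ => (r : ℂ) * uv t) (uv t) r := by
          simpa using (Complex.ofRealCLM.hasDerivAt (x := r)).mul_const (uv t)
        exact (hdiff _).hasFDerivAt.comp_hasDerivAt r h2
      have h3 := integral_Ioi_of_hasDerivAt_of_tendsto (a := 0) (m := 0)
        (f := fun r : ℝ => φ (r * uv t)) (f' := fun r => A (r, t))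
        (h1 0).continuousAt.continuousWithinAt (fun r _ => h1 r) ?_ ?_
      · rw [h3]; simp
      · have h1 : IntegrableOn (fun r => A (r, t)) (Set.Icc (0 : ℝ) R) :=
          (hAc.comp (by fun_prop)).continuousOn.integrableOn_compact isCompact_Icc
        refine h1.of_forall_sdiff_eq_zero measurableSet_Ioi ?_
        rintro r ⟨hr, hn'⟩
        have : R < r := by
          by_contra hcon
          exact hn' ⟨le_of_lt hr, not_lt.1 hcon⟩
        simp only [hA, hdz _ (hn _ _ this), zero_apply]
      · apply tendsto_const_nhds.congr'
        filter_upwards [eventually_gt_atTop R] with r hr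
        exact (hz _ (hn _ _ hr)).symm
    simp only [Prod.swap_prod_mk, this]
    rw [setIntegral_const]
    simp [Measure.real]
    left
    rw [ENNReal.toReal_ofReal (by positivity)]
    push_cast; ring
  have hBint : ∫ p in Set.Ioi (0 : ℝ) ×ˢ Set.Ioo (-π) π, B p = 0 := by
    rw [Measure.volume_eq_prod] at hBi ⊢
    rw [setIntegral_prod _ hBi]
    apply setIntegral_eq_zero_of_forall_eq_zero
    intro r hr
    have hr' : (r : ℂ) ≠ 0 := by exact_mod_cast (ne_of_gt hr)
    have h1 : ∀ t : ℝ, HasDerivAt (fun t : ℝ => (r : ℂ)⁻¹ * φ (r * uv t)) (B (r, t)) t := by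
      intro t
      have h2 := (uv_deriv t).const_mul (r : ℂ)
      have h3 := ((hdiff _).hasFDerivAt.comp_hasDerivAt t h2).const_mul ((r : ℂ)⁻¹)
      refine h3.congr_deriv ?_
      simp only [hB]
      rw [show (r : ℂ) * (Complex.I * uv t) = r • (Complex.I * uv t) by simp, map_smul]
      simp only [Complex.real_smul]
      field_simp
    rw [← integral_Ioc_eq_integral_Ioo, ← intervalIntegral.integral_of_le (by linarith [pi_pos]),
      intervalIntegral.integral_eq_sub_of_hasDerivAt (fun t _ => h1 t)
        ((hBc.comp (by fun_prop : Continuous fun t : ℝ => (r, t))).intervalIntegrable _ _)]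
    simp [uv]
  rw [← Complex.integral_comp_polarCoord_symm]
  have hcongr : ∫ p in polarCoord.target, p.1 • (db φ (Complex.polarCoord.symm p) *
      (Complex.polarCoord.symm p)⁻¹) = ∫ p in Set.Ioi (0 : ℝ) ×ˢ Set.Ioo (-π) π,
        ((1 / 2 : ℂ) * A p + (Complex.I / 2) * B p) := by
    apply setIntegral_congr_fun (measurableSet_Ioi.prod measurableSet_Ioo)
    rintro ⟨r, t⟩ ⟨hr, ht⟩
    have hr' : (r : ℂ) ≠ 0 := by exact_mod_cast (ne_of_gt hr)
    have hp : Complex.polarCoord.symm (r, t) = r * uv t := by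
      rw [Complex.polarCoord_symm_apply, uv]
    have hu : uv t ≠ 0 := by
      rw [← norm_ne_zero_iff, uv_norm]; norm_num
    have hcu : (starRingEnd ℂ) (uv t) = (uv t)⁻¹ := by
      rw [Complex.inv_def, Complex.normSq_eq_norm_sq, uv_norm]; simp
    simp only [hp, hA, hB, Complex.real_smul]
    rw [fderiv_eq_dz_db φ _ (uv t), fderiv_eq_dz_db φ _ (Complex.I * uv t), map_mul, hcu,
      Complex.conj_I]
    field_simp
    linear_combination (-dz φ (r * uv t) * uv t ^ 2 + db φ (r * uv t)) * Complex.I_sq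
  rw [hcongr, integral_add (hAi.const_mul _) (hBi.const_mul _), integral_const_mul,
    integral_const_mul, hAint, hBint]
  ring

lemma pompeiu {φ : ℂ → ℂ} (hφ : ContDiff ℝ 1 φ) (hc : HasCompactSupport φ) (z : ℂ) :
    ∫ ζ, db φ ζ * (ζ - z)⁻¹ = -π * φ z := by
  have h1 : ContDiff ℝ 1 (fun x => φ (x + z)) := hφ.comp (contDiff_id.add contDiff_const)
  have h2 : HasCompactSupport (fun x => φ (x + z)) :=
    hc.comp_homeomorph (Homeomorph.addRight z)
  have h3 := pompeiu_zero h1 h2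
  simp only [zero_add] at h3
  rw [← h3, ← integral_add_right_eq_self _ z]
  congr 1
  funext x
  simp only [add_sub_cancel_right, db, fderiv_comp_add_right]

/-- compactly supported functions: integral of `db` vanishes. -/
lemma integral_db_zero {φ : ℂ → ℂ} (hφ : ContDiff ℝ 1 φ) (hc : HasCompactSupport φ) :
    ∫ ζ, db φ ζ = 0 := by
  have h1 : ContDiff ℝ 1 (fun x => φ x * x) := hφ.mul contDiff_id
  have h3 := pompeiu_zero h1 (hc.mul_right)
  simp only [mul_zero] at h3
  rw [← h3]
  apply integral_congr_ae
  filter_upwards [compl_mem_ae_iff.2 (measure_singleton (0 : ℂ))] with z hz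
  have hz' : z ≠ 0 := hz
  rw [db_mul (g := fun x => x) (hφ.differentiable (by norm_num) z) differentiableAt_id,
    db_of_hol (f := fun x => x) differentiableAt_id]
  field_simp
  ring

lemma integral_dz_zero {φ : ℂ → ℂ} (hφ : ContDiff ℝ 1 φ) (hc : HasCompactSupport φ) :
    ∫ ζ, dz φ ζ = 0 := by
  have h1 : ContDiff ℝ 1 (fun x => (starRingEnd ℂ) (φ x)) :=
    Complex.conjCLE.contDiff.comp hφ
  have h2 : HasCompactSupport (fun x => (starRingEnd ℂ) (φ x)) := hc.comp_left (by simp)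
  have h3 := integral_db_zero h1 h2
  have h4 : ∀ z, db (fun x => (starRingEnd ℂ) (φ x)) z = (starRingEnd ℂ) (dz φ z) := fun z =>
    db_conj (hφ.differentiable (by norm_num) z)
  simp only [h4] at h3
  rw [integral_conj] at h3
  simpa using h3

/-! ### The Cauchy transform and regularity -/

lemma locInt_inv : LocallyIntegrable (fun z : ℂ => z⁻¹) volume := by
  refine locallyIntegrable_of_norm_le_rpow (C := 1) (α := 1) (by simp) (by simp) ?_
    (measurable_inv (G := ℂ)).aestronglyMeasurable
  filter_upwards with z
  rw [norm_inv, one_mul, Real.rpow_neg_one]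

/-- The Cauchy transform. -/
def cauchyT (g : ℂ → ℂ) (z : ℂ) : ℂ := (π : ℂ)⁻¹ *
  convolution (fun z : ℂ => z⁻¹) g (ContinuousLinearMap.mul ℝ ℂ) volume z

lemma cauchyT_contDiff {g : ℂ → ℂ} {n : ℕ∞} (hg : ContDiff ℝ n g) (hc : HasCompactSupport g) :
    ContDiff ℝ n (cauchyT g) := 
  contDiff_const.mul (hc.contDiff_convolution_right _ locInt_inv hg)

lemma cauchyT_db {g : ℂ → ℂ} (hg : ContDiff ℝ 1 g) (hc : HasCompactSupport g) (z : ℂ) :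
    db (cauchyT g) z = g z := by
  have h1 := hc.hasFDerivAt_convolution_right (ContinuousLinearMap.mul ℝ ℂ) locInt_inv hg z
  have hdg : Continuous (fderiv ℝ g) := hg.continuous_fderiv (by norm_num)
  have hex : ConvolutionExistsAt (fun z : ℂ => z⁻¹) (fderiv ℝ g) z
      ((ContinuousLinearMap.mul ℝ ℂ).precompR ℂ) volume :=
    (hc.fderiv ℝ).convolutionExists_right _ locInt_inv hdg z
  have hIntg : Integrable (fun t : ℂ => ((ContinuousLinearMap.mul ℝ ℂ).precompR ℂ) t⁻¹
    (fderiv ℝ g (z - t))) volume := hex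
  have happ : ∀ b : ℂ, fderiv ℝ (convolution (fun z : ℂ => z⁻¹) g
      (ContinuousLinearMap.mul ℝ ℂ) volume) z b = ∫ t, t⁻¹ * fderiv ℝ g (z - t) b := by
    intro b
    rw [h1.fderiv, convolution, ContinuousLinearMap.integral_apply hIntg]
    simp
  have happi : ∀ b : ℂ, Integrable (fun t : ℂ => t⁻¹ * fderiv ℝ g (z - t) b) := by
    intro b
    have := hIntg.apply_continuousLinearMap b
    simpa using this
  have h2 : db (cauchyT g) z = (π : ℂ)⁻¹ * db (convolution (fun z : ℂ => z⁻¹) g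
      (ContinuousLinearMap.mul ℝ ℂ) volume) z := db_const_mul _ h1.differentiableAt
  rw [h2, db, happ, happ, ← integral_const_mul, ← integral_add (happi 1) ((happi _).const_mul _),
    ← integral_div]
  have h3 : ContDiff ℝ 1 (fun t => g (z - t)) := hg.comp (contDiff_const.sub contDiff_id)
  have h4 : HasCompactSupport (fun t => g (z - t)) := hc.comp_homeomorph (Homeomorph.subLeft z)
  have h5 := pompeiu_zero h3 h4
  have h6 : ∀ t b, fderiv ℝ (fun t => g (z - t)) t b = - fderiv ℝ g (z - t) b := by
    intro t b
    have h7 : HasFDerivAt (fun t : ℂ => z - t) (-ContinuousLinearMap.id ℝ ℂ) t :=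
      (hasFDerivAt_id (𝕜 := ℝ) t).const_sub z
    have h8 : HasFDerivAt (fun t => g (z - t))
        ((fderiv ℝ g (z - t)).comp (-ContinuousLinearMap.id ℝ ℂ)) t :=
      HasFDerivAt.comp t (hg.differentiable (by norm_num) (z - t)).hasFDerivAt h7
    rw [h8.fderiv]
    simp
  have h7 : ∫ t, (t⁻¹ * fderiv ℝ g (z - t) 1 + Complex.I * (t⁻¹ * fderiv ℝ g (z - t) Complex.I)) / 2
      = - ∫ t, db (fun t => g (z - t)) t * t⁻¹ := by
    rw [← integral_neg]
    congr 1
    funext t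
    rw [db, h6, h6]
    ring
  rw [h7, h5]
  have : (π : ℂ) ≠ 0 := by exact_mod_cast pi_ne_zero
  simp only [sub_zero]
  field_simp

/-- extension by zero of a locally smooth function with compact support. -/
lemma contDiff_of_tsupport {φ : ℂ → ℂ} {n : WithTop ℕ∞}
    (h : ∀ z ∈ tsupport φ, ContDiffAt ℝ n φ z) : ContDiff ℝ n φ := by
  rw [contDiff_iff_contDiffAt]
  intro z
  by_cases hz : z ∈ tsupport φ
  · exact h z hz
  · have : φ =ᶠ[𝓝 z] fun _ => 0 := by
      have := (isClosed_tsupport φ).isOpen_compl.mem_nhds hz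
      filter_upwards [this] with y hy
      exact image_eq_zero_of_notMem_tsupport hy
    exact contDiffAt_const.congr_of_eventuallyEq this

lemma dbar_regularity {U : Set ℂ} (hU : IsOpen U) {F h : ℂ → ℂ}
    (hF : ∀ z ∈ U, ContDiffAt ℝ 1 F z) (hh : ∀ z ∈ U, ContDiffAt ℝ 2 h z)
    (hFh : ∀ z ∈ U, db F z = h z) : ∀ z ∈ U, ContDiffAt ℝ 2 F z := by
  intro z hz
  obtain ⟨r, hr, hrU⟩ := Metric.isOpen_iff.1 hU z hz
  let χ : ContDiffBump z := ⟨r / 4, r / 2, by linarith, by linarith⟩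
  set g : ℂ → ℂ := fun x => (χ x : ℂ) * h x with hg
  have hsub : tsupport g ⊆ closedBall z (r / 2) := by
    refine (tsupport_mul_subset_left).trans ?_
    refine (closure_mono ?_).trans χ.tsupport_eq.subset
    intro x hx
    simpa [Function.mem_support] using hx
  have hgc : HasCompactSupport g :=
    HasCompactSupport.of_support_subset_isCompact (isCompact_closedBall z (r / 2))
      (subset_closure.trans hsub)
  have hχ : ∀ n : ℕ∞, ContDiff ℝ n (fun x => (χ x : ℂ)) := fun n =>
    Complex.ofRealCLM.contDiff.comp χ.contDiff
  have hg2 : ContDiff ℝ 2 g := by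
    apply contDiff_of_tsupport
    intro x hx
    have hxU : x ∈ U := hrU ((closedBall_subset_ball (by linarith)) (hsub hx))
    exact (hχ 2).contDiffAt.mul (hh x hxU)
  have hT := cauchyT_contDiff (n := 2) hg2 hgc
  have hTd := cauchyT_db (hg2.of_le (by norm_num)) hgc
  have hball : ∀ x ∈ ball z (r / 4), DifferentiableAt ℂ (fun x => F x - cauchyT g x) x := by
    intro x hx
    have hxU : x ∈ U := hrU ((ball_subset_ball (by linarith)) hx)
    have hd1 := (hF x hxU).differentiableAt (by norm_num)
    have hd2 : DifferentiableAt ℝ (cauchyT g) x := hT.differentiable (by norm_num) x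
    apply hol_of_db (hd1.sub hd2)
    have h1 : (χ x) = 1 := χ.one_of_mem_closedBall (ball_subset_closedBall hx)
    change db (fun x => F x - cauchyT g x) x = 0
    rw [db_sub hd1 hd2, hTd, hFh x hxU, hg]
    simp [h1]
  have hol : DifferentiableOn ℂ (fun x => F x - cauchyT g x) (ball z (r / 4)) := fun x hx =>
    (hball x hx).differentiableWithinAt
  have hcd : ContDiffAt ℂ 2 (fun x => F x - cauchyT g x) z :=
    (hol.analyticAt (ball_mem_nhds z (by linarith))).contDiffAt
  have := (hcd.restrict_scalars ℝ).add hT.contDiffAt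
  refine this.congr_of_eventuallyEq ?_
  filter_upwards with x
  simp

lemma locInt_rpow {β : ℝ} (hβ : β < 2) :
    LocallyIntegrable (fun z : ℂ => ‖z‖ ^ (-β)) volume := by
  refine locallyIntegrable_of_norm_le_rpow (C := 1) (α := β) (by simp) (by simpa using hβ) ?_
    (measurable_norm.pow_const (-β)).aestronglyMeasurable
  filter_upwards with z
  rw [one_mul, Real.norm_of_nonneg (by positivity)]

lemma rpow_split {x y s t : ℝ} (hx : 0 < x) (hy : 0 < y) (hs : 0 ≤ s) (ht : 0 ≤ t) :
    x ^ (-s) * y ^ (-t) ≤ x ^ (-(s + t)) + y ^ (-(s + t)) := by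
  rcases le_total x y with h | h
  · have h1 : y ^ (-t) ≤ x ^ (-t) := Real.rpow_le_rpow_of_nonpos hx h (by linarith)
    have h2 : x ^ (-(s + t)) = x ^ (-s) * x ^ (-t) := by
      rw [← Real.rpow_add hx]; congr 1; ring
    have h3 : 0 < y ^ (-(s + t)) := by positivity
    have h4 : x ^ (-s) * y ^ (-t) ≤ x ^ (-s) * x ^ (-t) := by gcongr
    linarith
  · have h1 : x ^ (-s) ≤ y ^ (-s) := Real.rpow_le_rpow_of_nonpos hy h (by linarith)
    have h2 : y ^ (-(s + t)) = y ^ (-s) * y ^ (-t) := by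
      rw [← Real.rpow_add hy]; congr 1; ring
    have h3 : 0 < x ^ (-(s + t)) := by positivity
    have h4 : x ^ (-s) * y ^ (-t) ≤ y ^ (-s) * y ^ (-t) := by gcongr
    linarith

lemma kernel_pointwise {a : ℝ} (ha : 0 ≤ a) (ha2 : a < 2) {z ζ : ℂ} (h0 : ζ ≠ 0) (h1 : ζ ≠ z) :
    ‖z‖ ^ (a / 2) * (‖ζ‖ ^ (-a) * ‖ζ - z‖⁻¹) ≤
      2 * (‖ζ‖ ^ (-(1 + a / 2)) + ‖ζ - z‖ ^ (-(1 + a / 2))) := by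
  have hx : 0 < ‖ζ‖ := norm_pos_iff.2 h0
  have hy : 0 < ‖ζ - z‖ := norm_pos_iff.2 (sub_ne_zero.2 h1)
  set x := ‖ζ‖
  set y := ‖ζ - z‖
  have hz : ‖z‖ ≤ x + y := by
    have := norm_sub_le ζ (ζ - z)
    simpa using this
  have hz2 : ‖z‖ ^ (a / 2) ≤ x ^ (a / 2) + y ^ (a / 2) :=
    (Real.rpow_le_rpow (norm_nonneg z) hz (by linarith)).trans
      (Real.rpow_add_le_add_rpow hx.le hy.le (by linarith) (by linarith))
  have e1 : x ^ (a / 2) * (x ^ (-a) * y⁻¹) = x ^ (-(a / 2)) * y ^ (-1 : ℝ) := by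
    rw [← mul_assoc, ← Real.rpow_add hx, Real.rpow_neg_one]; congr 2; ring
  have e2 : y ^ (a / 2) * (x ^ (-a) * y⁻¹) = x ^ (-a) * y ^ (-(1 - a / 2)) := by
    rw [← Real.rpow_neg_one, mul_left_comm, ← Real.rpow_add hy]; congr 2; ring
  have f1 := rpow_split hx hy (s := a / 2) (t := 1) (by linarith) (by linarith)
  have f2 := rpow_split hx hy (s := a) (t := 1 - a / 2) (by linarith) (by linarith)
  rw [show a / 2 + 1 = 1 + a / 2 by ring] at f1
  rw [show a + (1 - a / 2) = 1 + a / 2 by ring] at f2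
  have hk : 0 ≤ x ^ (-a) * y⁻¹ := by positivity
  calc _ ≤ (x ^ (a / 2) + y ^ (a / 2)) * (x ^ (-a) * y⁻¹) := by gcongr
    _ = x ^ (-(a / 2)) * y ^ (-1 : ℝ) + x ^ (-a) * y ^ (-(1 - a / 2)) := by
      rw [add_mul, e1, e2]
    _ ≤ _ := by linarith

lemma kernel_bound {a : ℝ} (ha : 0 ≤ a) (ha2 : a < 2) {R : ℝ} (hR : 0 < R) :
    ∃ K : ℝ, 0 ≤ K ∧ ∀ z : ℂ, z ≠ 0 → ‖z‖ < R →
      IntegrableOn (fun ζ : ℂ => ‖ζ‖ ^ (-a) * ‖ζ - z‖⁻¹) (ball 0 R) ∧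
      ∫ ζ in ball (0 : ℂ) R, ‖ζ‖ ^ (-a) * ‖ζ - z‖⁻¹ ≤ K * ‖z‖ ^ (-(a / 2)) := by
  have hL : LocallyIntegrable (fun z : ℂ => ‖z‖ ^ (-(1 + a / 2))) volume :=
    locInt_rpow (by linarith)
  have hI : ∀ S : ℝ, IntegrableOn (fun z : ℂ => ‖z‖ ^ (-(1 + a / 2))) (ball 0 S) := fun S =>
    (hL.integrableOn_isCompact (isCompact_closedBall 0 S)).mono_set ball_subset_closedBall
  set J := ∫ ζ in ball (0 : ℂ) (2 * R), ‖ζ‖ ^ (-(1 + a / 2)) with hJ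
  have hJ0 : 0 ≤ J := integral_nonneg (fun _ => by positivity)
  refine ⟨2 * (J + J), by positivity, fun z hz hzR => ?_⟩
  have hzp : 0 < ‖z‖ := norm_pos_iff.2 hz
  have hsub : ball (0 : ℂ) R ⊆ (fun ζ => ζ - z) ⁻¹' ball 0 (2 * R) := by
    intro ζ hζ
    simp only [mem_ball_zero_iff, Set.mem_preimage] at hζ ⊢
    have := norm_sub_le ζ z
    linarith
  have hmp : MeasurePreserving (fun ζ : ℂ => ζ - z) volume volume :=
    measurePreserving_sub_right volume z
  have hme : MeasurableEmbedding (fun ζ : ℂ => ζ - z) :=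
    (Homeomorph.subRight z).measurableEmbedding
  have hI2' : IntegrableOn (fun ζ : ℂ => ‖ζ - z‖ ^ (-(1 + a / 2)))
      ((fun ζ => ζ - z) ⁻¹' ball 0 (2 * R)) :=
    (hmp.integrableOn_comp_preimage hme).2 (hI (2 * R))
  have hI2 := hI2'.mono_set hsub
  have hJ2 : ∫ ζ in ball (0 : ℂ) R, ‖ζ - z‖ ^ (-(1 + a / 2)) ≤ J := by
    have e := hmp.setIntegral_preimage_emb hme (fun ζ : ℂ => ‖ζ‖ ^ (-(1 + a / 2)))
      (ball 0 (2 * R))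
    rw [hJ, ← e]
    exact setIntegral_mono_set hI2' (ae_of_all _ fun _ => by positivity) hsub.eventuallyLE
  have hJ1 : ∫ ζ in ball (0 : ℂ) R, ‖ζ‖ ^ (-(1 + a / 2)) ≤ J := by
    exact setIntegral_mono_set (hI _) (ae_of_all _ fun _ => by positivity)
      (ball_subset_ball (by linarith)).eventuallyLE
  have hsum := ((hI R).add hI2).const_mul 2
  have hae : ∀ᵐ ζ ∂(volume.restrict (ball (0 : ℂ) R)),
      ‖z‖ ^ (a / 2) * (‖ζ‖ ^ (-a) * ‖ζ - z‖⁻¹) ≤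
      2 * (‖ζ‖ ^ (-(1 + a / 2)) + ‖ζ - z‖ ^ (-(1 + a / 2))) := by
    apply ae_restrict_of_ae
    filter_upwards [Measure.ae_ne volume (0 : ℂ), Measure.ae_ne volume z] with ζ h0 h1
    exact kernel_pointwise ha ha2 h0 h1
  have hIk' : IntegrableOn (fun ζ : ℂ => ‖z‖ ^ (a / 2) * (‖ζ‖ ^ (-a) * ‖ζ - z‖⁻¹))
      (ball 0 R) := by
    refine Integrable.mono' hsum (by fun_prop) ?_
    filter_upwards [hae] with ζ h
    rw [Real.norm_of_nonneg (by positivity)]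
    exact h
  have hpos : 0 < ‖z‖ ^ (a / 2) := by positivity
  have hIk : IntegrableOn (fun ζ : ℂ => ‖ζ‖ ^ (-a) * ‖ζ - z‖⁻¹) (ball 0 R) := by
    have := hIk'.const_mul (‖z‖ ^ (a / 2))⁻¹
    refine this.congr (ae_of_all _ fun ζ => ?_)
    field_simp
  refine ⟨hIk, ?_⟩
  have h5 := integral_mono_ae hIk' hsum hae
  rw [integral_const_mul] at h5
  have h6 : ∫ ζ in ball (0 : ℂ) R, 2 * (‖ζ‖ ^ (-(1 + a / 2)) + ‖ζ - z‖ ^ (-(1 + a / 2)))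
      ≤ 2 * (J + J) := by
    rw [integral_const_mul, integral_add (hI R) hI2]
    linarith
  have h7 : ‖z‖ ^ (-(a / 2)) = (‖z‖ ^ (a / 2))⁻¹ := Real.rpow_neg hzp.le _
  rw [h7, ← div_eq_mul_inv, le_div_iff₀ hpos, mul_comm]
  exact h5.trans h6

lemma annulus_supp {φ : ℂ → ℂ} {n : WithTop ℕ∞} {r₁ r₂ : ℝ}
    (h : ∀ z, ‖z‖ < r₁ ∨ r₂ < ‖z‖ → φ z = 0)
    (hreg : ∀ z, r₁ ≤ ‖z‖ → ‖z‖ ≤ r₂ → ContDiffAt ℝ n φ z) :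
    ContDiff ℝ n φ ∧ HasCompactSupport φ := by
  have hcl : IsClosed {z : ℂ | r₁ ≤ ‖z‖ ∧ ‖z‖ ≤ r₂} :=
    (isClosed_le continuous_const continuous_norm).inter
      (isClosed_le continuous_norm continuous_const)
  have hs : tsupport φ ⊆ {z : ℂ | r₁ ≤ ‖z‖ ∧ ‖z‖ ≤ r₂} := by
    refine closure_minimal ?_ hcl
    intro z hz
    by_contra hn
    apply hz
    apply h
    simp only [Set.mem_setOf_eq, not_and_or, not_le] at hn
    exact hn
  refine ⟨contDiff_of_tsupport fun z hz => hreg z (hs hz).1 (hs hz).2, ?_⟩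
  refine HasCompactSupport.of_support_subset_isCompact (isCompact_closedBall (0 : ℂ) r₂) ?_
  intro z hz
  simpa using (hs (subset_tsupport φ hz)).2

/-- complex valued bump -/
def cb {c : ℂ} (f : ContDiffBump c) : ℂ → ℂ := fun z => ((f z : ℝ) : ℂ)

lemma cb_contDiff {c : ℂ} (f : ContDiffBump c) {n : ℕ∞} : ContDiff ℝ n (cb f) :=
  Complex.ofRealCLM.contDiff.comp f.contDiff

lemma cb_one {c : ℂ} (f : ContDiffBump c) {z : ℂ} (h : dist z c < f.rIn) : cb f z = 1 := by
  simp [cb, f.one_of_mem_closedBall (mem_closedBall.2 h.le)]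

lemma cb_zero {c : ℂ} (f : ContDiffBump c) {z : ℂ} (h : f.rOut ≤ dist z c) : cb f z = 0 := by
  simp [cb, f.zero_of_le_dist h]

lemma db_cb_one {c : ℂ} (f : ContDiffBump c) {z : ℂ} (h : dist z c < f.rIn) : db (cb f) z = 0 := by
  have : cb f =ᶠ[𝓝 z] fun _ => 1 := by
    filter_upwards [isOpen_ball.mem_nhds (mem_ball.2 h)] with x hx
    exact cb_one f hx
  rw [db_congr this, db_const]

lemma db_cb_zero {c : ℂ} (f : ContDiffBump c) {z : ℂ} (h : f.rOut < dist z c) :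
    db (cb f) z = 0 := by
  have : cb f =ᶠ[𝓝 z] fun _ => 0 := by
    filter_upwards [(isOpen_lt continuous_const (continuous_id.dist continuous_const)).mem_nhds h]
      with x hx
    exact cb_zero f (le_of_lt hx)
  rw [db_congr this, db_const]

lemma cb_compact {c : ℂ} (f : ContDiffBump c) : HasCompactSupport (cb f) :=
  f.hasCompactSupport.comp_left (g := fun x : ℝ => (x : ℂ)) (by simp)

lemma fderiv_cb_bound {c : ℂ} (f : ContDiffBump c) :
    ∃ M, 0 ≤ M ∧ ∀ z, ‖db (cb f) z‖ ≤ M ∧ ‖dz (db (cb f)) z‖ ≤ M := by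
  have h2 : ContDiff ℝ 2 (cb f) := cb_contDiff f (n := 2)
  have h1 : ContDiff ℝ 1 (db (cb f)) :=
    contDiff_iff_contDiffAt.2 fun z => contDiffAt_db h2.contDiffAt (by norm_num)
  have h0 : ContDiff ℝ 0 (dz (db (cb f))) :=
    contDiff_iff_contDiffAt.2 fun z => contDiffAt_dz h1.contDiffAt (by norm_num)
  have hz : ∀ z, z ∉ tsupport (cb f) → db (cb f) z = 0 := by
    intro z hz
    rw [db_congr (notMem_tsupport_iff_eventuallyEq.1 hz)]
    exact db_const 0 z
  have hz' : ∀ z, z ∉ tsupport (cb f) → dz (db (cb f)) z = 0 := by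
    intro z hz1
    have : db (cb f) =ᶠ[𝓝 z] fun _ => 0 := by
      filter_upwards [(isClosed_tsupport (cb f)).isOpen_compl.mem_nhds hz1] with x hx
      exact hz x hx
    rw [dz_congr this, dz_const]
  obtain ⟨M1, hM1⟩ := (HasCompactSupport.intro (cb_compact f) (f := db (cb f)) (fun {z} h => hz z h)).exists_bound_of_continuous h1.continuous
  obtain ⟨M2, hM2⟩ := (HasCompactSupport.intro (cb_compact f) (f := dz (db (cb f))) (fun {z} h => hz' z h)).exists_bound_of_continuous h0.continuous
  refine ⟨max M1 M2, ?_, fun z => ⟨(hM1 z).trans (le_max_left _ _), (hM2 z).trans (le_max_right _ _)⟩⟩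
  exact (norm_nonneg _).trans ((hM1 0).trans (le_max_left _ _))

/-- unit bump -/
def ubump : ContDiffBump (0 : ℂ) := ⟨1, 2, by norm_num, by norm_num⟩

/-- scaled bump -/
def sb (ε : ℝ) (z : ℂ) : ℂ := cb ubump (((ε⁻¹ : ℝ) : ℂ) * z)

lemma sb_contDiff (ε : ℝ) {n : ℕ∞} : ContDiff ℝ n (sb ε) :=
  (cb_contDiff ubump).comp (contDiff_const.mul contDiff_id)

lemma norm_smul_eps {ε : ℝ} (hε : 0 < ε) (z : ℂ) : ‖((ε⁻¹ : ℝ) : ℂ) * z‖ = ‖z‖ / ε := by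
  rw [norm_mul, Complex.norm_real, Real.norm_of_nonneg (by positivity)]; field_simp

lemma sb_one {ε : ℝ} (hε : 0 < ε) {z : ℂ} (h : ‖z‖ < ε) : sb ε z = 1 := by
  apply cb_one
  rw [dist_zero_right, norm_smul_eps hε]
  exact (div_lt_one hε).2 h

lemma sb_zero {ε : ℝ} (hε : 0 < ε) {z : ℂ} (h : 2 * ε ≤ ‖z‖) : sb ε z = 0 := by
  apply cb_zero
  rw [dist_zero_right, norm_smul_eps hε]
  exact (le_div_iff₀ hε).2 h

lemma db_sb (ε : ℝ) : db (sb ε) = fun z => ((ε⁻¹ : ℝ) : ℂ) * db (cb ubump) (((ε⁻¹ : ℝ) : ℂ) * z) := by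
  funext z
  have h1 : HasDerivAt (fun z : ℂ => ((ε⁻¹ : ℝ) : ℂ) * z) ((ε⁻¹ : ℝ) : ℂ) z := by
    simpa using (hasDerivAt_id z).const_mul ((ε⁻¹ : ℝ) : ℂ)
  have := db_comp_hol (f := cb ubump) h1
    (((cb_contDiff ubump (n := 1)).differentiable (by norm_num)).differentiableAt)
  rw [Complex.conj_ofReal] at this
  exact this

lemma db_sb_one {ε : ℝ} (hε : 0 < ε) {z : ℂ} (h : ‖z‖ < ε) : db (sb ε) z = 0 := by
  rw [db_sb]
  simp only
  rw [db_cb_one, mul_zero]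
  rw [dist_zero_right, norm_smul_eps hε]
  exact (div_lt_one hε).2 h

lemma db_sb_zero {ε : ℝ} (hε : 0 < ε) {z : ℂ} (h : 2 * ε < ‖z‖) : db (sb ε) z = 0 := by
  rw [db_sb]
  simp only
  rw [db_cb_zero, mul_zero]
  rw [dist_zero_right, norm_smul_eps hε]
  exact (lt_div_iff₀ hε).2 h

lemma dz_db_sb (ε : ℝ) (z : ℂ) : dz (db (sb ε)) z =
    ((ε⁻¹ : ℝ) : ℂ) * (((ε⁻¹ : ℝ) : ℂ) * dz (db (cb ubump)) (((ε⁻¹ : ℝ) : ℂ) * z)) := by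
  rw [db_sb]
  have h1 : HasDerivAt (fun z : ℂ => ((ε⁻¹ : ℝ) : ℂ) * z) ((ε⁻¹ : ℝ) : ℂ) z := by
    simpa using (hasDerivAt_id z).const_mul ((ε⁻¹ : ℝ) : ℂ)
  have hd : ∀ y, DifferentiableAt ℝ (db (cb ubump)) y := fun y =>
    (contDiffAt_db (m := 1) (cb_contDiff ubump (n := 2)).contDiffAt (by norm_num)).differentiableAt
      (by norm_num)
  have h2 : DifferentiableAt ℝ (fun z => db (cb ubump) (((ε⁻¹ : ℝ) : ℂ) * z)) z :=
    (hd _).comp z (by fun_prop)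
  rw [dz_const_mul _ h2, dz_comp_hol h1 (hd _)]

lemma dz_db_sb_zero {ε : ℝ} (hε : 0 < ε) {z : ℂ} (h : 2 * ε < ‖z‖) : dz (db (sb ε)) z = 0 := by
  have : db (sb ε) =ᶠ[𝓝 z] fun _ => 0 := by
    filter_upwards [(isOpen_lt continuous_const continuous_norm).mem_nhds h] with x hx
    exact db_sb_zero hε hx
  rw [dz_congr this, dz_const]

lemma sb_bound : ∃ M, 0 ≤ M ∧ ∀ ε : ℝ, 0 < ε → ∀ z, ‖db (sb ε) z‖ ≤ M / ε ∧
    ‖dz (db (sb ε)) z‖ ≤ M / ε ^ 2 := by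
  obtain ⟨M, hM, h⟩ := fderiv_cb_bound ubump
  refine ⟨M, hM, fun ε hε z => ⟨?_, ?_⟩⟩
  · rw [db_sb]
    simp only
    rw [norm_smul_eps hε]
    have := (h (((ε⁻¹ : ℝ) : ℂ) * z)).1
    gcongr
  · rw [dz_db_sb, norm_smul_eps hε, norm_smul_eps hε, div_div, ← sq]
    have := (h (((ε⁻¹ : ℝ) : ℂ) * z)).2
    gcongr

lemma cb_norm_le {c : ℂ} (f : ContDiffBump c) (z : ℂ) : ‖cb f z‖ ≤ 1 := by
  rw [cb, Complex.norm_real, Real.norm_of_nonneg f.nonneg]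
  exact f.le_one

lemma one_sub_cb_norm_le {c : ℂ} (f : ContDiffBump c) (z : ℂ) : ‖1 - cb f z‖ ≤ 1 := by
  rw [cb, ← Complex.ofReal_one, ← Complex.ofReal_sub, Complex.norm_real,
    Real.norm_of_nonneg (by linarith [f.le_one (x := z)])]
  linarith [f.nonneg (x := z)]

lemma integral_ball_const (r c : ℝ) (hr : 0 ≤ r) :
    ∫ _ζ in ball (0 : ℂ) r, c = π * r ^ 2 * c := by
  rw [setIntegral_const, smul_eq_mul, Measure.real, Complex.volume_ball]
  simp [ENNReal.toReal_ofReal hr]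
  ring_nf
  simp

lemma grad_zero {w : ℂ → ℂ} {a C R : ℝ} (ha : 0 ≤ a) (ha2 : a < 2) (hR : 0 < R)
    (hw : Tendsto w (𝓝[≠] 0) (𝓝 0))
    (hreg : ∀ z, z ≠ 0 → ‖z‖ < R → ContDiffAt ℝ 2 w z)
    (hh : ∀ z, z ≠ 0 → ‖z‖ < R → ‖db (dz w) z‖ ≤ C * ‖z‖ ^ (-a)) :
    ∃ C', ∀ z, z ≠ 0 → ‖z‖ < R / 4 → ‖dz w z‖ ≤ C' * ‖z‖ ^ (-(a / 2)) := by
  let X : ContDiffBump (0 : ℂ) := ⟨R / 2, 3 * R / 4, by linarith, by linarith⟩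
  obtain ⟨K, hK0, hK⟩ := kernel_bound ha ha2 hR
  obtain ⟨M, hM0, hM⟩ := sb_bound
  have hdw : ∀ z, z ≠ 0 → ‖z‖ < R → ContDiffAt ℝ 1 (dz w) z := fun z h1 h2 =>
    contDiffAt_dz (hreg z h1 h2) (by norm_num)
  have hX2 : ContDiff ℝ 2 (cb X) := cb_contDiff X (n := 2)
  have hXd : ∀ z, DifferentiableAt ℝ (cb X) z := fun z =>
    (hX2.differentiable (by norm_num)).differentiableAt
  have hdX : ∀ z, ContDiffAt ℝ 1 (db (cb X)) z := fun z =>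
    contDiffAt_db hX2.contDiffAt (by norm_num)
  -- outer term
  have hA := annulus_supp (φ := fun ζ => db (cb X) ζ * dz w ζ) (n := 0) (r₁ := R / 2)
    (r₂ := 3 * R / 4) (by
      rintro z (h | h)
      · rw [db_cb_one X (by rw [dist_zero_right]; exact h), zero_mul]
      · rw [db_cb_zero X (by rw [dist_zero_right]; exact h), zero_mul])
    (by
      intro z h1 h2
      have hz0 : z ≠ 0 := by rintro rfl; simp at h1; linarith
      exact ((hdX z).of_le (by norm_num)).mul ((hdw z hz0 (by linarith)).of_le (by norm_num)))
  obtain ⟨M1, hM1⟩ := hA.2.exists_bound_of_continuous hA.1.continuous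
  have hM10 : 0 ≤ M1 := (norm_nonneg _).trans (hM1 0)
  have hC0 : 0 ≤ C := by
    have h1 := hh ((R / 2 : ℝ) : ℂ) (by simp; linarith) (by
      rw [Complex.norm_real, Real.norm_of_nonneg (by positivity)]; linarith)
    have h2 : 0 < ‖((R / 2 : ℝ) : ℂ)‖ ^ (-a) := by
      apply Real.rpow_pos_of_pos
      rw [Complex.norm_real, Real.norm_of_nonneg (by positivity)]; linarith
    by_contra hn
    push Not at hn
    have := mul_neg_of_neg_of_pos hn h2
    linarith [norm_nonneg (db (dz w) ((R / 2 : ℝ) : ℂ))]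
  set T := π * R ^ 2 * (M1 * (4 / R)) + 1 with hT
  have hT0 : 0 ≤ T := by positivity
  refine ⟨(T * R ^ (a / 2) + C * K) / π, fun z₀ hz0 hzR => ?_⟩
  have hp : 0 < ‖z₀‖ := norm_pos_iff.2 hz0
  -- choice of ε
  set δ := ‖z₀‖ / (54 * π * (M + 1)) with hδ
  have hδ0 : 0 < δ := by positivity
  obtain ⟨r, hr0, hr⟩ : ∃ r > 0, ∀ ζ : ℂ, ζ ≠ 0 → ‖ζ‖ < r → ‖w ζ‖ < δ := by
    have := hw (ball_mem_nhds (0 : ℂ) hδ0)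
    rw [mem_map, Metric.mem_nhdsWithin_iff] at this
    obtain ⟨r, hr0, hr⟩ := this
    refine ⟨r, hr0, fun ζ h1 h2 => ?_⟩
    have := hr ⟨mem_ball_zero_iff.2 h2, h1⟩
    simpa using this
  obtain ⟨ε, hε0, hε1, hε2⟩ : ∃ ε : ℝ, 0 < ε ∧ 3 * ε ≤ r ∧ 8 * ε ≤ ‖z₀‖ := by
    refine ⟨min (r / 3) (‖z₀‖ / 8), by positivity, ?_, ?_⟩
    · linarith [min_le_left (r / 3) (‖z₀‖ / 8)]
    · linarith [min_le_right (r / 3) (‖z₀‖ / 8)]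
  have hS2 : ContDiff ℝ 2 (sb ε) := sb_contDiff ε (n := 2)
  have hSd : ∀ z, DifferentiableAt ℝ (sb ε) z := fun z =>
    (hS2.differentiable (by norm_num)).differentiableAt
  have hdS : ∀ z, ContDiffAt ℝ 1 (db (sb ε)) z := fun z =>
    contDiffAt_db hS2.contDiffAt (by norm_num)
  have hkd : ∀ ζ, ζ ≠ z₀ → HasDerivAt (fun ζ : ℂ => (ζ - z₀)⁻¹) (-((ζ - z₀) ^ 2)⁻¹) ζ := by
    intro ζ hζ
    have h1 : HasDerivAt (fun ζ : ℂ => ζ - z₀) 1 ζ := (hasDerivAt_id ζ).sub_const z₀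
    have h2 := h1.inv (sub_ne_zero.2 hζ)
    refine h2.congr_deriv ?_
    rw [neg_div, one_div]
  have hkc : ∀ ζ, ζ ≠ z₀ → ContDiffAt ℝ 1 (fun ζ : ℂ => (ζ - z₀)⁻¹) ζ := by
    intro ζ hζ
    exact (contDiffAt_id.sub contDiffAt_const).inv (sub_ne_zero.2 hζ)
  set φ : ℂ → ℂ := fun ζ => (cb X ζ - sb ε ζ) * dz w ζ with hφ
  set ψ : ℂ → ℂ := fun ζ => w ζ * (db (sb ε) ζ * (ζ - z₀)⁻¹) with hψ
  have hφ0 : ∀ z, ‖z‖ < ε ∨ 3 * R / 4 < ‖z‖ → φ z = 0 := by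
    rintro z (h | h)
    · simp only [hφ]
      rw [sb_one hε0 h, cb_one X (by rw [dist_zero_right]; change ‖z‖ < R / 2; linarith)]
      ring
    · simp only [hφ]
      rw [sb_zero hε0 (by linarith), cb_zero X (by rw [dist_zero_right]; exact h.le)]
      ring
  have hφc := annulus_supp (φ := φ) (n := 1) hφ0 (by
      intro z h1 h2
      have hz0 : z ≠ 0 := by rintro rfl; simp at h1; linarith
      exact ((hX2.contDiffAt.of_le (by norm_num)).sub (hS2.contDiffAt.of_le (by norm_num))).mul
        (hdw z hz0 (by linarith)))
  have hψ0 : ∀ z, ‖z‖ < ε ∨ 2 * ε < ‖z‖ → ψ z = 0 := by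
    rintro z (h | h)
    · simp only [hψ]
      rw [db_sb_one hε0 h]
      ring
    · simp only [hψ]
      rw [db_sb_zero hε0 h]
      ring
  have hψc := annulus_supp (φ := ψ) (n := 1) hψ0 (by
      intro z h1 h2
      have hz0 : z ≠ 0 := by rintro rfl; simp at h1; linarith
      have hz1 : z ≠ z₀ := by rintro rfl; linarith
      exact ((hreg z hz0 (by linarith)).of_le (by norm_num)).mul ((hdS z).mul (hkc z hz1)))
  have hP := pompeiu hφc.1 hφc.2 z₀
  have hQ := integral_dz_zero hψc.1 hψc.2
  have hφz : φ z₀ = dz w z₀ := by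
    simp only [hφ]
    rw [sb_zero hε0 (by linarith), cb_one X (by rw [dist_zero_right]; change ‖z₀‖ < R / 2; linarith)]
    ring
  rw [hφz] at hP
  -- dominating function
  set g1 : ℂ → ℝ := (ball (0 : ℂ) R).indicator (fun _ => M1 * (4 / R)) with hg1
  set g2 : ℂ → ℝ := (ball (0 : ℂ) R).indicator (fun ζ => C * (‖ζ‖ ^ (-a) * ‖ζ - z₀‖⁻¹)) with hg2
  set g3 : ℂ → ℝ := (ball (0 : ℂ) (3 * ε)).indicator (fun _ => 6 * δ * M / (ε ^ 2 * ‖z₀‖)) with hg3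
  have hi1 : Integrable g1 := by
    rw [hg1, integrable_indicator_iff measurableSet_ball]
    exact integrableOn_const (measure_ball_lt_top.ne)
  have hi3 : Integrable g3 := by
    rw [hg3, integrable_indicator_iff measurableSet_ball]
    exact integrableOn_const (measure_ball_lt_top.ne)
  have hi2 : Integrable g2 := by
    rw [hg2, integrable_indicator_iff measurableSet_ball]
    exact ((hK z₀ hz0 (by linarith)).1).const_mul C
  have hv1 : ∫ ζ, g1 ζ = π * R ^ 2 * (M1 * (4 / R)) := by
    rw [hg1, integral_indicator measurableSet_ball, integral_ball_const _ _ hR.le]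
  have hv3 : ∫ ζ, g3 ζ ≤ 1 := by
    rw [hg3, integral_indicator measurableSet_ball, integral_ball_const _ _ (by positivity)]
    have : π * (3 * ε) ^ 2 * (6 * δ * M / (ε ^ 2 * ‖z₀‖)) = M / (M + 1) := by
      rw [hδ]; field_simp; ring
    rw [this, div_le_one (by positivity)]
    linarith
  have hv2 : ∫ ζ, g2 ζ ≤ C * (K * ‖z₀‖ ^ (-(a / 2))) := by
    rw [hg2, integral_indicator measurableSet_ball, integral_const_mul]
    exact mul_le_mul_of_nonneg_left (hK z₀ hz0 (by linarith)).2 hC0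
  have hbound : ∀ᵐ ζ, ‖db φ ζ * (ζ - z₀)⁻¹ + dz ψ ζ‖ ≤ g1 ζ + g2 ζ + g3 ζ := by
    filter_upwards [Measure.ae_ne volume (0 : ℂ), Measure.ae_ne volume z₀] with ζ h0 h1
    have hg10 : 0 ≤ g1 ζ := Set.indicator_nonneg (fun _ _ => by positivity) ζ
    have hg20 : 0 ≤ g2 ζ := Set.indicator_nonneg (fun _ _ => by positivity) ζ
    have hg30 : 0 ≤ g3 ζ := Set.indicator_nonneg (fun _ _ => by positivity) ζ
    rcases lt_or_ge ‖ζ‖ R with hζR | hζR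
    · have dw1 : DifferentiableAt ℝ (dz w) ζ := (hdw ζ h0 hζR).differentiableAt (by norm_num)
      have dw0 : DifferentiableAt ℝ w ζ := (hreg ζ h0 hζR).differentiableAt (by norm_num)
      have dS : DifferentiableAt ℝ (db (sb ε)) ζ := (hdS ζ).differentiableAt (by norm_num)
      have dk : DifferentiableAt ℝ (fun ζ : ℂ => (ζ - z₀)⁻¹) ζ :=
        (hkc ζ h1).differentiableAt (by norm_num)
      have e1 : db φ ζ = (db (cb X) ζ - db (sb ε) ζ) * dz w ζ
          + (cb X ζ - sb ε ζ) * db (dz w) ζ := by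
        rw [hφ, db_mul ((hXd ζ).fun_sub (hSd ζ)) dw1, db_sub (hXd ζ) (hSd ζ)]
      have e2 : dz ψ ζ = dz w ζ * (db (sb ε) ζ * (ζ - z₀)⁻¹) + w ζ * (dz (db (sb ε)) ζ * (ζ - z₀)⁻¹
          + db (sb ε) ζ * (-((ζ - z₀) ^ 2)⁻¹)) := by
        rw [hψ, dz_mul dw0 (dS.fun_mul dk), dz_mul dS dk, dz_of_hol (hkd ζ h1)]
      have e3 : db φ ζ * (ζ - z₀)⁻¹ + dz ψ ζ = (db (cb X) ζ * dz w ζ) * (ζ - z₀)⁻¹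
          + (cb X ζ - sb ε ζ) * (db (dz w) ζ * (ζ - z₀)⁻¹)
          + w ζ * (dz (db (sb ε)) ζ * (ζ - z₀)⁻¹ + db (sb ε) ζ * (-((ζ - z₀) ^ 2)⁻¹)) := by
        rw [e1, e2]; ring
      rw [e3]
      have hmem : ζ ∈ ball (0 : ℂ) R := mem_ball_zero_iff.2 hζR
      refine (norm_add_le _ _).trans (add_le_add ((norm_add_le _ _).trans (add_le_add ?_ ?_)) ?_)
      · rw [hg1, Set.indicator_of_mem hmem]
        rcases lt_or_ge ‖ζ‖ (R / 2) with h2 | h2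
        · rw [db_cb_one X (by rw [dist_zero_right]; exact h2)]
          simp only [zero_mul, norm_zero]
          positivity
        · rw [norm_mul, norm_inv]
          have h3 : R / 4 ≤ ‖ζ - z₀‖ := by
            have := norm_sub_norm_le ζ z₀
            linarith
          have h4 : ‖ζ - z₀‖⁻¹ ≤ 4 / R := by
            rw [show 4 / R = (R / 4)⁻¹ by field_simp]
            exact inv_anti₀ (by positivity) h3
          exact mul_le_mul (hM1 ζ) h4 (by positivity) hM10
      · rw [hg2, Set.indicator_of_mem hmem]
        have h2 : ‖cb X ζ - sb ε ζ‖ ≤ 1 := by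
          rcases lt_or_ge ‖ζ‖ (2 * ε) with h2 | h2
          · rw [cb_one X (by rw [dist_zero_right]; change ‖ζ‖ < R / 2; linarith)]
            exact one_sub_cb_norm_le _ _
          · rw [sb_zero hε0 h2, sub_zero]
            exact cb_norm_le _ _
        rw [norm_mul, norm_mul, norm_inv]
        calc _ ≤ 1 * (C * ‖ζ‖ ^ (-a) * ‖ζ - z₀‖⁻¹) := by
              have := hh ζ h0 hζR
              gcongr
          _ = _ := by ring
      · rcases lt_or_ge ‖ζ‖ (3 * ε) with h2 | h2
        · rw [hg3, Set.indicator_of_mem (mem_ball_zero_iff.2 h2)]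
          have h3 : ‖z₀‖ / 2 ≤ ‖ζ - z₀‖ := by
            have := norm_sub_norm_le z₀ ζ
            rw [norm_sub_rev] at this
            linarith
          have h4 : ‖ζ - z₀‖⁻¹ ≤ 2 / ‖z₀‖ := by
            rw [show 2 / ‖z₀‖ = (‖z₀‖ / 2)⁻¹ by field_simp]
            exact inv_anti₀ (by positivity) h3
          have h5 := (hr ζ h0 (by linarith)).le
          have h6 := (hM ε hε0 ζ).1
          have h7 := (hM ε hε0 ζ).2
          have h8 : ‖dz (db (sb ε)) ζ * (ζ - z₀)⁻¹ + db (sb ε) ζ * (-((ζ - z₀) ^ 2)⁻¹)‖ ≤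
              M / ε ^ 2 * (2 / ‖z₀‖) + M / ε * (2 / ‖z₀‖) ^ 2 := by
            refine (norm_add_le _ _).trans ?_
            rw [norm_mul, norm_mul, norm_neg, norm_inv, norm_inv, norm_pow, ← inv_pow]
            gcongr
          have h9 : M / ε * (2 / ‖z₀‖) ^ 2 ≤ M / ε ^ 2 * (4 / ‖z₀‖) := by
            have : M / ε * (2 / ‖z₀‖) ^ 2 = M / ε ^ 2 * (4 / ‖z₀‖) * (ε / ‖z₀‖) := by
              field_simp; norm_num
            rw [this]
            apply mul_le_of_le_one_right (by positivity)
            rw [div_le_one hp]; linarith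
          rw [norm_mul]
          calc _ ≤ δ * (M / ε ^ 2 * (2 / ‖z₀‖) + M / ε ^ 2 * (4 / ‖z₀‖)) := by
                exact mul_le_mul h5 (h8.trans (by linarith)) (norm_nonneg _) hδ0.le
            _ = _ := by field_simp; ring
        · rw [db_sb_zero hε0 (by linarith), dz_db_sb_zero hε0 (by linarith)]
          simpa using hg30
    · have z1 : db φ ζ = 0 := by
        have : φ =ᶠ[𝓝 ζ] fun _ => 0 := by
          filter_upwards [(isOpen_lt continuous_const continuous_norm).mem_nhds
            (show 3 * R / 4 < ‖ζ‖ by linarith)] with x hx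
          exact hφ0 x (Or.inr hx)
        rw [db_congr this, db_const]
      have z2 : dz ψ ζ = 0 := by
        have : ψ =ᶠ[𝓝 ζ] fun _ => 0 := by
          filter_upwards [(isOpen_lt continuous_const continuous_norm).mem_nhds
            (show 2 * ε < ‖ζ‖ by linarith)] with x hx
          exact hψ0 x (Or.inr hx)
        rw [dz_congr this, dz_const]
      rw [z1, z2]
      simp only [zero_mul, add_zero, norm_zero]
      positivity
  have hIntg := norm_integral_le_of_norm_le ((hi1.add hi2).add hi3) hbound
  -- integrals
  have hψi : Integrable (dz ψ) := by
    have hcont : Continuous (dz ψ) := by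
      have : ContDiff ℝ 0 (dz ψ) := contDiff_iff_contDiffAt.2 fun z =>
        contDiffAt_dz hψc.1.contDiffAt (by norm_num)
      exact this.continuous
    refine hcont.integrable_of_hasCompactSupport ?_
    refine HasCompactSupport.intro hψc.2 fun z hz => ?_
    rw [dz_congr (notMem_tsupport_iff_eventuallyEq.1 hz)]
    exact dz_const 0 z
  have hφi : Integrable (fun ζ => db φ ζ * (ζ - z₀)⁻¹) := by
    by_contra hn
    have hz := integral_undef hn
    have hall : Integrable (fun ζ => db φ ζ * (ζ - z₀)⁻¹ + dz ψ ζ) := by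
      refine Integrable.mono' ((hi1.add hi2).add hi3) ?_ hbound
      have hcont : Continuous (db φ) := by
        have : ContDiff ℝ 0 (db φ) := contDiff_iff_contDiffAt.2 fun z =>
          contDiffAt_db hφc.1.contDiffAt (by norm_num)
        exact this.continuous
      have hm : Measurable (fun ζ => db φ ζ * (ζ - z₀)⁻¹) :=
        hcont.measurable.mul ((measurable_id.sub_const z₀).inv)
      exact hm.aestronglyMeasurable.add hψi.aestronglyMeasurable
    apply hn
    refine (hall.sub hψi).congr (ae_of_all _ fun ζ => ?_)
    simp
  rw [integral_add hφi hψi, hP, hQ, add_zero] at hIntg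
  rw [norm_mul, norm_neg, Complex.norm_real, Real.norm_of_nonneg pi_pos.le] at hIntg
  have hsum : ∫ ζ, g1 ζ + g2 ζ + g3 ζ ≤ T + C * (K * ‖z₀‖ ^ (-(a / 2))) := by
    have e : ∫ ζ, g1 ζ + g2 ζ + g3 ζ = (∫ ζ, g1 ζ) + (∫ ζ, g2 ζ) + ∫ ζ, g3 ζ := by
      rw [← integral_add hi1 hi2]
      exact integral_add (hi1.add hi2) hi3
    rw [e, hv1, hT]
    linarith
  have hTb : T ≤ T * R ^ (a / 2) * ‖z₀‖ ^ (-(a / 2)) := by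
    rw [Real.rpow_neg hp.le, mul_assoc, ← div_eq_mul_inv]
    apply le_mul_of_one_le_right hT0
    rw [one_le_div (by positivity)]
    exact Real.rpow_le_rpow hp.le (by linarith) (by linarith)
  rw [div_mul_eq_mul_div, le_div_iff₀ pi_pos]
  have hIntg' := hIntg.trans hsum
  linarith

/-- Gradient estimate near an isolated singularity. -/
lemma grad_bound {w : ℂ → ℂ} {a C : ℝ} {p c : ℂ} (ha : 0 ≤ a) (ha2 : a < 2)
    (hw : Tendsto w (𝓝[≠] p) (𝓝 c))
    (hreg : ∀ᶠ z in 𝓝[≠] p, ContDiffAt ℝ 2 w z)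
    (hh : ∀ᶠ z in 𝓝[≠] p, ‖db (dz w) z‖ ≤ C * ‖z - p‖ ^ (-a)) :
    ∃ C', ∀ᶠ z in 𝓝[≠] p, ‖dz w z‖ ≤ C' * ‖z - p‖ ^ (-(a / 2)) := by
  have h := hreg.and hh
  rw [eventually_nhdsWithin_iff, Metric.eventually_nhds_iff] at h
  obtain ⟨R, hR, h⟩ := h
  have htr : ∀ z : ℂ, HasDerivAt (fun z : ℂ => z + p) 1 z := fun z => (hasDerivAt_id z).add_const p
  have hdist : ∀ z : ℂ, ‖z‖ < R → dist (z + p) p < R := fun z hz => by simpa [dist_eq_norm] using hz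
  have hne : ∀ z : ℂ, z ≠ 0 → z + p ∈ ({p}ᶜ : Set ℂ) := fun z hz => by simpa using hz
  have hd : ∀ z, z ≠ 0 → ‖z‖ < R → dz (fun x => w (x + p) - c) z = dz w (z + p) := by
    intro z h1 h2
    have h3 := (h (hdist z h2) (hne z h1)).1.differentiableAt (by norm_num)
    have h4 : DifferentiableAt ℝ (fun x => w (x + p)) z :=
      DifferentiableAt.comp (f := fun x : ℂ => x + p) z h3 (by fun_prop)
    rw [dz_sub h4 (differentiableAt_const c),
      dz_const, dz_comp_hol (htr z) h3]
    ring
  have hev : ∀ z : ℂ, z ≠ 0 → ‖z‖ < R → ∀ᶠ x in 𝓝 z, x ≠ 0 ∧ ‖x‖ < R := fun z h1 h2 =>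
    Filter.Eventually.and (isOpen_ne.mem_nhds h1)
      ((isOpen_lt continuous_norm continuous_const).mem_nhds h2)
  obtain ⟨C', hC'⟩ := grad_zero (w := fun x => w (x + p) - c) (a := a) (C := C) ha ha2 hR
    (by
      have h1 : Tendsto (fun x : ℂ => x + p) (𝓝[≠] 0) (𝓝[≠] p) := by
        refine tendsto_nhdsWithin_iff.2 ⟨?_, ?_⟩
        · have : Tendsto (fun x : ℂ => x + p) (𝓝 0) (𝓝 (0 + p)) := by
            exact (continuous_id.add continuous_const).tendsto 0
          rw [zero_add] at this
          exact this.mono_left nhdsWithin_le_nhds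
        · filter_upwards [self_mem_nhdsWithin] with x hx
          exact hne x hx
      have h2 := (hw.comp h1).sub_const c
      rwa [sub_self] at h2)
    (by
      intro z h1 h2
      have h3 := (h (hdist z h2) (hne z h1)).1
      exact (h3.comp z (contDiffAt_id.add contDiffAt_const)).sub contDiffAt_const)
    (by
      intro z h1 h2
      have e : dz (fun x => w (x + p) - c) =ᶠ[𝓝 z] fun x => dz w (x + p) := by
        filter_upwards [hev z h1 h2] with x hx
        exact hd x hx.1 hx.2
      have h3 := (h (hdist z h2) (hne z h1))
      rw [db_congr e, db_comp_hol (htr z)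
        ((contDiffAt_dz (m := 1) h3.1 (by norm_num)).differentiableAt (by norm_num))]
      simpa using h3.2)
  refine ⟨C', ?_⟩
  rw [eventually_nhdsWithin_iff, Metric.eventually_nhds_iff]
  refine ⟨R / 4, by positivity, fun {z} h1 h2 => ?_⟩
  have h3 := hC' (z - p) (sub_ne_zero.2 h2) (by simpa [dist_eq_norm] using h1)
  rw [hd (z - p) (sub_ne_zero.2 h2) (by rw [dist_eq_norm] at h1; linarith)] at h3
  simpa using h3

/-- A good exhausting sequence of cutoffs in `D`. -/
structure GoodCut (D : Set ℂ) (η : ℕ → ℂ → ℝ) (C₀ : ℝ) : Prop where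
  smooth : ∀ k, ContDiff ℝ 1 (fun z => (η k z : ℂ))
  nonneg : ∀ k z, 0 ≤ η k z
  le_one : ∀ k z, η k z ≤ 1
  supp : ∀ k, HasCompactSupport (fun z => (η k z : ℂ))
  sub : ∀ k, tsupport (fun z => (η k z : ℂ)) ⊆ D
  step : ∀ k z, η k z ≠ 0 → η (k + 1) z = 1
  ev : ∀ z ∈ D, ∃ k, η k z = 1
  energy : ∀ k, ∫ z, ‖db (fun z => (η k z : ℂ)) z‖ ^ 2 ≤ C₀

section
variable {D : Set ℂ} {η : ℕ → ℂ → ℝ} {C₀ : ℝ}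

lemma GoodCut.step_ts (h : GoodCut D η C₀) (k : ℕ) {z : ℂ}
    (hz : z ∈ tsupport (fun z => (η k z : ℂ))) : η (k + 1) z = 1 := by
  have hcl : IsClosed {z : ℂ | (η (k + 1) z : ℂ) = 1} :=
    isClosed_eq (h.smooth (k + 1)).continuous continuous_const
  have hs : tsupport (fun z => (η k z : ℂ)) ⊆ {z : ℂ | (η (k + 1) z : ℂ) = 1} := by
    refine closure_minimal ?_ hcl
    intro x hx
    have : η k x ≠ 0 := fun h0 => hx (by simp [h0])
    simp [h.step k x this]
  have := hs hz
  exact_mod_cast this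

lemma GoodCut.db_step (h : GoodCut D η C₀) (k : ℕ) {z : ℂ}
    (hz : db (fun z => (η (k + 1) z : ℂ)) z ≠ 0) : η (k + 2) z = 1 ∧ η k z = 0 := by
  constructor
  · apply h.step_ts
    by_contra hn
    apply hz
    rw [db_congr (notMem_tsupport_iff_eventuallyEq.1 hn)]
    exact db_const 0 z
  · by_contra hn
    apply hz
    have h1 : ∀ᶠ x in 𝓝 z, (η k x : ℂ) ≠ 0 :=
      (h.smooth k).continuous.continuousAt.eventually_ne (by exact_mod_cast hn)
    have h2 : (fun z => (η (k + 1) z : ℂ)) =ᶠ[𝓝 z] fun _ => 1 := by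
      filter_upwards [h1] with x hx
      rw [h.step k x (by exact_mod_cast hx)]
      simp
    rw [db_congr h2, db_const]

lemma GoodCut.mono (h : GoodCut D η C₀) (k : ℕ) (z : ℂ) : η k z ≤ η (k + 1) z := by
  by_cases h0 : η k z = 0
  · rw [h0]; exact h.nonneg _ _
  · rw [h.step k z h0]; exact h.le_one _ _

lemma GoodCut.vanish (hD : IsOpen D) (h : GoodCut D η C₀) {F : ℂ → ℂ} {Φ : ℂ → ℝ} {K : ℝ}
    (hK : 0 < K) (hF : ∀ z ∈ D, ContDiffAt ℝ 1 F z) (hdb : ∀ z ∈ D, db F z = Φ z)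
    (hFΦ : ∀ z ∈ D, ‖F z‖ ^ 2 ≤ K ^ 2 * Φ z) : ∀ z ∈ D, Φ z = 0 := by
  have hΦ0 : ∀ z ∈ D, 0 ≤ Φ z := by
    intro z hz
    have h1 := hFΦ z hz
    have h2 : 0 ≤ ‖F z‖ ^ 2 := by positivity
    by_contra hn
    push Not at hn
    nlinarith [sq_pos_of_pos hK]
  have hcΦ : ∀ z ∈ D, ContinuousAt Φ z := by
    intro z hz
    have h1 : ContinuousAt (db F) z := (contDiffAt_db (m := 0) (hF z hz) (by norm_num)).continuousAt
    have h2 : ContinuousAt (fun x => (db F x).re) z := Complex.continuous_re.continuousAt.comp h1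
    refine h2.congr ?_
    filter_upwards [hD.mem_nhds hz] with x hx
    rw [hdb x hx, Complex.ofReal_re]
  have hηc : ∀ k, Continuous (η k) := fun k =>
    (Complex.continuous_re.comp (h.smooth k).continuous).congr (fun z => by simp)
  have hzero : ∀ k z, z ∉ D → η k z = 0 := by
    intro k z hz
    have : z ∉ tsupport (fun z => (η k z : ℂ)) := fun hh => hz (h.sub k hh)
    have := image_eq_zero_of_notMem_tsupport this
    exact_mod_cast this
  have hsΦ : ∀ k, Continuous (fun z => η k z ^ 2 * Φ z) := by
    intro k
    rw [continuous_iff_continuousAt]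
    intro z
    by_cases hz : z ∈ tsupport (fun z => (η k z : ℂ))
    · exact ((hηc k).continuousAt.pow 2).mul (hcΦ z (h.sub k hz))
    · have : (fun z => η k z ^ 2 * Φ z) =ᶠ[𝓝 z] fun _ => 0 := by
        filter_upwards [notMem_tsupport_iff_eventuallyEq.1 hz] with x hx
        have hx' : η k x = 0 := by simpa using hx
        simp [hx']
      exact this.continuousAt
  have hsc : ∀ k, HasCompactSupport (fun z => η k z ^ 2 * Φ z) := by
    intro k
    refine HasCompactSupport.intro (h.supp k) fun z hz => ?_
    have := image_eq_zero_of_notMem_tsupport hz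
    have hx' : η k z = 0 := by exact_mod_cast this
    simp [hx']
  have hsi : ∀ k, Integrable (fun z => η k z ^ 2 * Φ z) := fun k =>
    (hsΦ k).integrable_of_hasCompactSupport (hsc k)
  have hs0 : ∀ k z, 0 ≤ η k z ^ 2 * Φ z := by
    intro k z
    by_cases hz : z ∈ D
    · exact mul_nonneg (sq_nonneg _) (hΦ0 z hz)
    · simp [hzero k z hz]
  set b : ℕ → ℝ := fun k => ∫ z, η k z ^ 2 * Φ z with hb
  have hmono : Monotone b := by
    refine monotone_nat_of_le_succ fun k => ?_
    refine integral_mono (hsi k) (hsi (k + 1)) fun z => ?_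
    by_cases hz : z ∈ D
    · have := h.mono k z
      have h0 := h.nonneg k z
      have := hΦ0 z hz
      simp only
      gcongr
    · simp [hzero _ z hz]
  have hdηc : ∀ k, Continuous (db (fun z => (η k z : ℂ))) := fun k => by
    have : ContDiff ℝ 0 (db (fun z => (η k z : ℂ))) := contDiff_iff_contDiffAt.2 fun z =>
      contDiffAt_db (h.smooth k).contDiffAt (by norm_num)
    exact this.continuous
  have hdη0 : ∀ k z, z ∉ tsupport (fun z => (η k z : ℂ)) → db (fun z => (η k z : ℂ)) z = 0 := by
    intro k z hz
    rw [db_congr (notMem_tsupport_iff_eventuallyEq.1 hz)]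
    exact db_const 0 z
  have hEi : ∀ k, Integrable (fun z => ‖db (fun z => (η k z : ℂ)) z‖ ^ 2) := by
    intro k
    refine ((hdηc k).norm.pow 2).integrable_of_hasCompactSupport ?_
    refine HasCompactSupport.intro (h.supp k) fun z hz => ?_
    simp [hdη0 k z hz]
  -- the basic identity
  have hbasic : ∀ k (g : ℂ → ℝ), Integrable g →
      (∀ z ∈ D, 2 * η k z * ‖db (fun z => (η k z : ℂ)) z‖ * ‖F z‖ ≤ g z) → (∀ z ∉ D, 0 ≤ g z) →
      b k ≤ ∫ z, g z := by
    intro k g hg hgb hg0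
    set φ : ℂ → ℂ := fun z => ((η k z : ℂ) * (η k z : ℂ)) * F z with hφ
    have hts : tsupport φ ⊆ tsupport (fun z => (η k z : ℂ)) := by
      refine closure_mono ?_
      intro x hx hx0
      apply hx
      have : (η k x : ℂ) = 0 := hx0
      simp [hφ, this]
    have hφ1 : ContDiff ℝ 1 φ := contDiff_of_tsupport fun z hz =>
      ((h.smooth k).contDiffAt.mul (h.smooth k).contDiffAt).mul (hF z (h.sub k (hts hz)))
    have hφ2 : HasCompactSupport φ := (h.supp k).mono' ((subset_tsupport φ).trans hts)
    have h0 := integral_db_zero hφ1 hφ2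
    set G : ℂ → ℂ := fun z => 2 * η k z * db (fun z => (η k z : ℂ)) z * F z with hG
    have hdφ : ∀ z, db φ z = G z + ((η k z ^ 2 * Φ z : ℝ) : ℂ) := by
      intro z
      by_cases hz : z ∈ tsupport (fun z => (η k z : ℂ))
      · have d1 : DifferentiableAt ℝ (fun z => (η k z : ℂ)) z :=
          ((h.smooth k).differentiable (by norm_num)).differentiableAt
        have d2 := (hF z (h.sub k hz)).differentiableAt (by norm_num)
        rw [hφ, db_mul (d1.fun_mul d1) d2, db_mul d1 d1, hdb z (h.sub k hz), hG]
        push_cast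
        ring
      · have e1 : φ =ᶠ[𝓝 z] fun _ => 0 := by
          filter_upwards [notMem_tsupport_iff_eventuallyEq.1 hz] with x hx
          have hx' : (η k x : ℂ) = 0 := hx
          simp [hφ, hx']
        have hx' : η k z = 0 := by exact_mod_cast image_eq_zero_of_notMem_tsupport hz
        rw [db_congr e1, db_const]
        simp [hG, hx']
    have hφi : Integrable (db φ) := by
      have hc : ContDiff ℝ 0 (db φ) := contDiff_iff_contDiffAt.2 fun z =>
        contDiffAt_db hφ1.contDiffAt (by norm_num)
      refine hc.continuous.integrable_of_hasCompactSupport ?_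
      refine HasCompactSupport.intro hφ2 fun z hz => ?_
      rw [db_congr (notMem_tsupport_iff_eventuallyEq.1 hz)]
      exact db_const 0 z
    have hGi : Integrable G := by
      refine (hφi.sub (hsi k).ofReal).congr (ae_of_all _ fun z => ?_)
      simp only [Pi.sub_apply, hdφ]
      simp
    have h1 : ∫ z, db φ z = (∫ z, G z) + ((b k : ℝ) : ℂ) := by
      have e : ((b k : ℝ) : ℂ) = ∫ z, ((η k z ^ 2 * Φ z : ℝ) : ℂ) :=
        (integral_ofReal (𝕜 := ℂ) (f := fun z => η k z ^ 2 * Φ z)).symm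
      have e2 : Integrable (fun z => ((η k z ^ 2 * Φ z : ℝ) : ℂ)) := (hsi k).ofReal
      rw [e, ← integral_add hGi e2]
      exact integral_congr_ae (ae_of_all _ hdφ)
    rw [h0] at h1
    have h2 : ((b k : ℝ) : ℂ) = -∫ z, G z := by linear_combination -h1
    have hb0 : 0 ≤ b k := integral_nonneg (hs0 k)
    have h3 : b k = ‖∫ z, G z‖ := by
      have := congrArg norm h2
      rwa [norm_neg, Complex.norm_real, Real.norm_of_nonneg hb0] at this
    rw [h3]
    refine norm_integral_le_of_norm_le hg (ae_of_all _ fun z => ?_)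
    by_cases hz : z ∈ D
    · refine le_trans (le_of_eq ?_) (hgb z hz)
      simp only [hG, norm_mul, Complex.norm_real, Complex.norm_ofNat,
        Real.norm_of_nonneg (h.nonneg k z)]
    · simp only [hG, hzero k z hz]
      simpa using hg0 z hz
  have hK2 : 0 < K ^ 2 := by positivity
  -- boundedness
  have hbd : ∀ k, b k ≤ 4 * K ^ 2 * C₀ := by
    intro k
    have h1 := hbasic k (fun z => 2 * K ^ 2 * ‖db (fun z => (η k z : ℂ)) z‖ ^ 2
      + (1 / 2) * (η k z ^ 2 * Φ z)) (((hEi k).const_mul _).add ((hsi k).const_mul _)) (by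
        intro z hz
        have h1 := hFΦ z hz
        set x := ‖db (fun z => (η k z : ℂ)) z‖
        set y := ‖F z‖
        set e := η k z
        have h2 : 2 * e * x * y ≤ 2 * K ^ 2 * x ^ 2 + 1 / 2 * (e ^ 2 * (y ^ 2 / K ^ 2)) := by
          have : 2 * K ^ 2 * x ^ 2 + 1 / 2 * (e ^ 2 * (y ^ 2 / K ^ 2)) - 2 * e * x * y
            = 1 / 2 * (2 * K * x - e * y / K) ^ 2 := by field_simp; ring
          nlinarith [sq_nonneg (2 * K * x - e * y / K)]
        have h3 : y ^ 2 / K ^ 2 ≤ Φ z := by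
          rw [div_le_iff₀ hK2]; linarith
        have h4 : e ^ 2 * (y ^ 2 / K ^ 2) ≤ e ^ 2 * Φ z := by gcongr
        linarith) (by
        intro z hz
        simp only [hzero k z hz]
        have : 0 ≤ 2 * K ^ 2 * ‖db (fun z => (η k z : ℂ)) z‖ ^ 2 := by positivity
        simpa using this)
    rw [integral_add ((hEi k).const_mul _) ((hsi k).const_mul _), integral_const_mul,
      integral_const_mul] at h1
    have h2 := h.energy k
    have h3 : 2 * K ^ 2 * ∫ z, ‖db (fun z => (η k z : ℂ)) z‖ ^ 2 ≤ 2 * K ^ 2 * C₀ := by gcongr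
    have h4 : (∫ z, η k z ^ 2 * Φ z) = b k := rfl
    rw [h4] at h1
    linarith
  have hrec : ∀ δ : ℝ, 0 < δ → ∀ k, b (k + 1) ≤ K ^ 2 * C₀ / δ + δ * (b (k + 2) - b k) := by
    intro δ hδ k
    have h1 := hbasic (k + 1) (fun z => K ^ 2 / δ * ‖db (fun z => (η (k + 1) z : ℂ)) z‖ ^ 2
      + δ * (η (k + 2) z ^ 2 * Φ z - η k z ^ 2 * Φ z))
      (((hEi (k + 1)).const_mul _).add (((hsi (k + 2)).sub (hsi k)).const_mul δ)) (by
        intro z hz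
        have h1 := hFΦ z hz
        by_cases hd : db (fun z => (η (k + 1) z : ℂ)) z = 0
        · rw [hd]
          have h2 := (h.mono k z).trans (h.mono (k + 1) z)
          have h3 := h.nonneg k z
          have h4 : η k z ^ 2 * Φ z ≤ η (k + 2) z ^ 2 * Φ z := by
            have := hΦ0 z hz
            gcongr
          have h5 : 0 ≤ δ * (η (k + 2) z ^ 2 * Φ z - η k z ^ 2 * Φ z) :=
            mul_nonneg hδ.le (by linarith)
          simpa using h5
        · obtain ⟨h2, h3⟩ := h.db_step k hd
          rw [h2, h3]
          set x := ‖db (fun z => (η (k + 1) z : ℂ)) z‖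
          set y := ‖F z‖
          have he := h.le_one (k + 1) z
          have he0 := h.nonneg (k + 1) z
          have hxy : 0 ≤ x * y := by positivity
          have h4 : 2 * η (k + 1) z * x * y ≤ 2 * (x * y) := by nlinarith
          have h5 : 2 * (x * y) ≤ K ^ 2 / δ * x ^ 2 + δ * (y ^ 2 / K ^ 2) := by
            have : K ^ 2 / δ * x ^ 2 + δ * (y ^ 2 / K ^ 2) - 2 * (x * y)
              = (K ^ 2 * x - δ * y) ^ 2 / (δ * K ^ 2) := by field_simp; ring
            have h6 : 0 ≤ (K ^ 2 * x - δ * y) ^ 2 / (δ * K ^ 2) := by positivity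
            linarith
          have h3 : y ^ 2 / K ^ 2 ≤ Φ z := by
            rw [div_le_iff₀ hK2]; linarith
          have h4 : δ * (y ^ 2 / K ^ 2) ≤ δ * Φ z := by gcongr
          simp only [one_pow, one_mul]
          rw [show (0 : ℝ) ^ 2 * Φ z = 0 by ring]
          linarith) (by
        intro z hz
        simp only [hzero _ z hz]
        have : 0 ≤ K ^ 2 / δ * ‖db (fun z => (η (k + 1) z : ℂ)) z‖ ^ 2 := by positivity
        simpa using this)
    have h7 : ∫ z, δ * (η (k + 2) z ^ 2 * Φ z - η k z ^ 2 * Φ z) = δ * (b (k + 2) - b k) := by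
      rw [integral_const_mul, integral_sub (hsi (k + 2)) (hsi k)]
    have h9 : Integrable (fun z => δ * (η (k + 2) z ^ 2 * Φ z - η k z ^ 2 * Φ z)) :=
      ((hsi (k + 2)).sub (hsi k)).const_mul δ
    rw [integral_add ((hEi (k + 1)).const_mul _) h9, h7,
      integral_const_mul] at h1
    have h3 : K ^ 2 / δ * ∫ z, ‖db (fun z => (η (k + 1) z : ℂ)) z‖ ^ 2 ≤ K ^ 2 / δ * C₀ := by
      have := h.energy (k + 1)
      gcongr
    have h8 : K ^ 2 / δ * C₀ = K ^ 2 * C₀ / δ := by ring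
    linarith
  -- limit
  obtain ⟨l, hl⟩ : ∃ l, Tendsto b atTop (𝓝 l) :=
    ⟨_, tendsto_atTop_ciSup hmono ⟨4 * K ^ 2 * C₀, by rintro _ ⟨k, rfl⟩; exact hbd k⟩⟩
  have hl' : ∀ δ : ℝ, 0 < δ → l ≤ K ^ 2 * C₀ / δ := by
    intro δ hδ
    have h1 : Tendsto (fun k => K ^ 2 * C₀ / δ + δ * (b (k + 2) - b k)) atTop
        (𝓝 (K ^ 2 * C₀ / δ + δ * (l - l))) :=
      tendsto_const_nhds.add ((((tendsto_add_atTop_iff_nat 2).2 hl).sub hl).const_mul δ)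
    have h2 := le_of_tendsto_of_tendsto' ((tendsto_add_atTop_iff_nat 1).2 hl) h1 (hrec δ hδ)
    simpa using h2
  have hl0 : l ≤ 0 := by
    have h1 : Tendsto (fun δ : ℝ => K ^ 2 * C₀ / δ) atTop (𝓝 0) := tendsto_const_nhds.div_atTop tendsto_id
    refine ge_of_tendsto h1 ?_
    filter_upwards [eventually_gt_atTop 0] with δ hδ
    exact hl' δ hδ
  intro z hz
  obtain ⟨k, hk⟩ := h.ev z hz
  have hbk : b k = 0 := le_antisymm ((hmono.ge_of_tendsto hl k).trans hl0)
    (integral_nonneg (hs0 k))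
  have h1 := (integral_eq_zero_iff_of_nonneg (hs0 k) (hsi k)).1 hbk
  have h2 := ((hsΦ k).ae_eq_iff_eq volume continuous_const).1 h1
  have h3 : η k z ^ 2 * Φ z = 0 := congrFun h2 z
  simpa [hk] using h3

end

/-- real scaled bump -/
def sr (ε : ℝ) (z : ℂ) : ℝ := ubump (((ε⁻¹ : ℝ) : ℂ) * z)

lemma sb_eq_sr (ε : ℝ) (z : ℂ) : sb ε z = (sr ε z : ℂ) := rfl

lemma sr_nonneg (ε : ℝ) (z : ℂ) : 0 ≤ sr ε z := ubump.nonneg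
lemma sr_le_one (ε : ℝ) (z : ℂ) : sr ε z ≤ 1 := ubump.le_one

lemma sr_one {ε : ℝ} (hε : 0 < ε) {z : ℂ} (h : ‖z‖ ≤ ε) : sr ε z = 1 := by
  apply ubump.one_of_mem_closedBall
  rw [mem_closedBall, dist_zero_right, norm_smul_eps hε]
  exact (div_le_one hε).2 h

lemma sr_zero {ε : ℝ} (hε : 0 < ε) {z : ℂ} (h : 2 * ε ≤ ‖z‖) : sr ε z = 0 := by
  apply ubump.zero_of_le_dist
  rw [dist_zero_right, norm_smul_eps hε]
  exact (le_div_iff₀ hε).2 h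

lemma norm_db_prod {ι : Type*} (s : Finset ι) (F : ι → ℂ → ℂ) (z : ℂ)
    (hd : ∀ i, DifferentiableAt ℝ (F i) z) (h1 : ∀ i, ‖F i z‖ ≤ 1) :
    DifferentiableAt ℝ (fun x => ∏ i ∈ s, F i x) z ∧ ‖∏ i ∈ s, F i z‖ ≤ 1 ∧
    ‖db (fun x => ∏ i ∈ s, F i x) z‖ ≤ ∑ i ∈ s, ‖db (F i) z‖ := by
  classical
  induction s using Finset.induction_on with
  | empty => simp [db_const]
  | insert a s ha ih =>
    obtain ⟨i1, i2, i3⟩ := ih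
    simp only [Finset.prod_insert ha, Finset.sum_insert ha]
    refine ⟨(hd a).fun_mul i1, ?_, ?_⟩
    · rw [norm_mul]
      exact mul_le_one₀ (h1 a) (norm_nonneg _) i2
    · rw [db_mul (hd a) i1]
      refine (norm_add_le _ _).trans ?_
      rw [norm_mul, norm_mul]
      have e1 : ‖db (F a) z‖ * ‖∏ i ∈ s, F i z‖ ≤ ‖db (F a) z‖ :=
        mul_le_of_le_one_right (norm_nonneg _) i2
      have e2 : ‖F a z‖ * ‖db (fun x => ∏ i ∈ s, F i x) z‖ ≤ ‖db (fun x => ∏ i ∈ s, F i x) z‖ :=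
        mul_le_of_le_one_left (norm_nonneg _) (h1 a)
      linarith

/-- the cutoffs -/
def eta {N : ℕ} (q : Fin N → ℂ) (k : ℕ) (z : ℂ) : ℝ :=
  sr (2 ^ k) z * ∏ j, (1 - sr ((2 ^ k)⁻¹) (z - q j))

lemma eta_cast {N : ℕ} (q : Fin N → ℂ) (k : ℕ) : (fun z => (eta q k z : ℂ)) =
    fun z => sb (2 ^ k) z * ∏ j, (1 - sb ((2 ^ k)⁻¹) (z - q j)) := by
  funext z
  simp [eta, sb_eq_sr]

lemma sb_energy : ∃ E, 0 ≤ E ∧ ∀ ε : ℝ, 0 < ε → ∀ p : ℂ,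
    Integrable (fun z => ‖db (sb ε) (z - p)‖ ^ 2) ∧ ∫ z, ‖db (sb ε) (z - p)‖ ^ 2 ≤ E := by
  obtain ⟨M, hM0, hM⟩ := sb_bound
  refine ⟨9 * π * M ^ 2, by positivity, fun ε hε p => ?_⟩
  have hi : Integrable ((ball (0 : ℂ) (3 * ε)).indicator (fun _ => (M / ε) ^ 2)) := by
    rw [integrable_indicator_iff measurableSet_ball]
    exact integrableOn_const (measure_ball_lt_top.ne)
  have hb : ∀ z, ‖db (sb ε) z‖ ^ 2 ≤ (ball (0 : ℂ) (3 * ε)).indicator (fun _ => (M / ε) ^ 2) z := by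
    intro z
    rcases lt_or_ge ‖z‖ (3 * ε) with h | h
    · rw [Set.indicator_of_mem (mem_ball_zero_iff.2 h)]
      have := (hM ε hε z).1
      gcongr
    · rw [db_sb_zero hε (by linarith), Set.indicator_of_notMem (by simpa using h)]
      simp
  have hc : Continuous (db (sb ε)) := by
    have : ContDiff ℝ 0 (db (sb ε)) := contDiff_iff_contDiffAt.2 fun z =>
      contDiffAt_db (sb_contDiff ε (n := 1)).contDiffAt (by norm_num)
    exact this.continuous
  have hI : Integrable (fun z => ‖db (sb ε) z‖ ^ 2) := by
    refine hi.mono' (hc.norm.pow 2).aestronglyMeasurable (ae_of_all _ fun z => ?_)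
    rw [Real.norm_of_nonneg (by positivity)]
    exact hb z
  refine ⟨hI.comp_sub_right p, ?_⟩
  rw [integral_sub_right_eq_self (fun z => ‖db (sb ε) z‖ ^ 2) p]
  refine (integral_mono hI hi hb).trans ?_
  rw [integral_indicator measurableSet_ball, integral_ball_const _ _ (by positivity)]
  apply le_of_eq
  field_simp
  ring

lemma eta_good {N : ℕ} (q : Fin N → ℂ) : ∃ C₀, GoodCut (Set.range q)ᶜ (eta q) C₀ := by
  obtain ⟨E, hE0, hE⟩ := sb_energy
  have hstep : ∀ k z, eta q k z ≠ 0 → eta q (k + 1) z = 1 := by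
    intro k z hz
    rw [eta, mul_ne_zero_iff, Finset.prod_ne_zero_iff] at hz
    have hp : (0 : ℝ) < 2 ^ k := by positivity
    have h1 : sr (2 ^ (k + 1)) z = 1 := by
      apply sr_one (by positivity)
      by_contra hn
      push Not at hn
      exact hz.1 (sr_zero hp (by rw [pow_succ] at hn; linarith))
    have h2 : ∀ j, sr ((2 ^ (k + 1))⁻¹) (z - q j) = 0 := by
      intro j
      apply sr_zero (by positivity)
      have e : 2 * ((2 : ℝ) ^ (k + 1))⁻¹ = (2 ^ k)⁻¹ := by
        rw [pow_succ]; field_simp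
      rw [e]
      by_contra hn
      push Not at hn
      apply hz.2 j (Finset.mem_univ j)
      rw [sr_one (by positivity) hn.le, sub_self]
    simp [eta, h1, h2]
  have hsm : ∀ k, ContDiff ℝ 1 (fun z => (eta q k z : ℂ)) := by
    intro k
    rw [eta_cast]
    refine (sb_contDiff _ (n := 1)).mul (contDiff_prod fun j _ => contDiff_const.sub ?_)
    exact (sb_contDiff _ (n := 1)).comp (contDiff_id.sub contDiff_const)
  have h0 : ∀ k z, 0 ≤ eta q k z := fun k z => mul_nonneg (sr_nonneg _ _)
    (Finset.prod_nonneg fun j _ => by linarith [sr_le_one ((2 ^ k)⁻¹) (z - q j)])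
  have h1 : ∀ k z, eta q k z ≤ 1 := fun k z => mul_le_one₀ (sr_le_one _ _)
    (Finset.prod_nonneg fun j _ => by linarith [sr_le_one ((2 ^ k)⁻¹) (z - q j)])
    (Finset.prod_le_one (fun j _ => by linarith [sr_le_one ((2 ^ k)⁻¹) (z - q j)])
      (fun j _ => by linarith [sr_nonneg ((2 ^ k)⁻¹) (z - q j)]))
  refine ⟨2 * E + 2 * (N * (N * E)), hsm, h0, h1, ?_, ?_, hstep, ?_, ?_⟩
  · intro k
    refine HasCompactSupport.intro (isCompact_closedBall (0 : ℂ) (2 * 2 ^ k)) fun z hz => ?_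
    rw [mem_closedBall, dist_zero_right, not_le] at hz
    rw [eta, sr_zero (by positivity) hz.le]
    simp
  · intro k
    have hcl : IsClosed {z : ℂ | (eta q (k + 1) z : ℂ) = 1} :=
      isClosed_eq (hsm (k + 1)).continuous continuous_const
    have hs : tsupport (fun z => (eta q k z : ℂ)) ⊆ {z : ℂ | (eta q (k + 1) z : ℂ) = 1} := by
      refine closure_minimal ?_ hcl
      intro x hx
      have : eta q k x ≠ 0 := fun h0 => hx (by simp [h0])
      simp [hstep k x this]
    intro z hz hzq
    obtain ⟨j, rfl⟩ := hzq
    have h2 : eta q (k + 1) (q j) = 1 := by exact_mod_cast hs hz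
    have h3 : eta q (k + 1) (q j) = 0 := by
      rw [eta, Finset.prod_eq_zero (Finset.mem_univ j), mul_zero]
      rw [sub_self, sr_one (by positivity) (by simp), sub_self]
    linarith
  · intro z hz
    have hT : Tendsto (fun k : ℕ => (2 : ℝ) ^ k) atTop atTop :=
      tendsto_pow_atTop_atTop_of_one_lt (by norm_num)
    have e1 : ∀ᶠ k : ℕ in atTop, ‖z‖ ≤ 2 ^ k := hT.eventually_ge_atTop _
    have e2 : ∀ j, ∀ᶠ k : ℕ in atTop, 2 * ((2 : ℝ) ^ k)⁻¹ ≤ ‖z - q j‖ := by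
      intro j
      have hp : 0 < ‖z - q j‖ := norm_pos_iff.2 (sub_ne_zero.2 fun h => hz ⟨j, h.symm⟩)
      have : Tendsto (fun k : ℕ => 2 * ((2 : ℝ) ^ k)⁻¹) atTop (𝓝 (2 * 0)) :=
        (tendsto_inv_atTop_zero.comp hT).const_mul 2
      rw [mul_zero] at this
      exact this.eventually_le_const hp
    obtain ⟨k, hk1, hk2⟩ := (e1.and (eventually_all.2 e2)).exists
    refine ⟨k, ?_⟩
    rw [eta, sr_one (by positivity) hk1, one_mul]
    apply Finset.prod_eq_one
    intro j _
    rw [sr_zero (by positivity) (hk2 j), sub_zero]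
  · intro k
    have hp : (0 : ℝ) < 2 ^ k := by positivity
    have hp' : (0 : ℝ) < (2 ^ k)⁻¹ := by positivity
    have hdS : ∀ ε z, DifferentiableAt ℝ (sb ε) z := fun ε z =>
      ((sb_contDiff ε (n := 1)).differentiable (by norm_num)).differentiableAt
    have hdJ : ∀ j z, DifferentiableAt ℝ (fun x => 1 - sb ((2 ^ k)⁻¹) (x - q j)) z := by
      intro j z
      exact (differentiableAt_const _).fun_sub (DifferentiableAt.comp (f := fun x : ℂ => x - q j) z
        (hdS _ _) (by fun_prop))
    have hdbJ : ∀ j z, ‖db (fun x => 1 - sb ((2 ^ k)⁻¹) (x - q j)) z‖ =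
        ‖db (sb ((2 ^ k)⁻¹)) (z - q j)‖ := by
      intro j z
      have htr : HasDerivAt (fun z : ℂ => z - q j) 1 z := (hasDerivAt_id z).sub_const (q j)
      have hc : DifferentiableAt ℝ (fun x => sb ((2 ^ k)⁻¹) (x - q j)) z :=
        DifferentiableAt.comp (f := fun x : ℂ => x - q j) z (hdS _ _) (by fun_prop)
      rw [db_sub (differentiableAt_const _) hc, db_const, db_comp_hol htr (hdS _ _)]
      simp
    have hpt : ∀ z, ‖db (fun z => (eta q k z : ℂ)) z‖ ^ 2 ≤ 2 * ‖db (sb (2 ^ k)) (z - 0)‖ ^ 2 +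
        2 * (N * ∑ j, ‖db (sb ((2 ^ k)⁻¹)) (z - q j)‖ ^ 2) := by
      intro z
      rw [eta_cast, sub_zero]
      obtain ⟨i1, i2, i3⟩ := norm_db_prod Finset.univ (fun j x => 1 - sb ((2 ^ k)⁻¹) (x - q j)) z
        (fun j => hdJ j z) (fun j => one_sub_cb_norm_le _ _)
      simp only [hdbJ] at i3
      have h4 : ‖db (fun z => sb (2 ^ k) z * ∏ j, (1 - sb ((2 ^ k)⁻¹) (z - q j))) z‖ ≤
          ‖db (sb (2 ^ k)) z‖ + ∑ j, ‖db (sb ((2 ^ k)⁻¹)) (z - q j)‖ := by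
        rw [db_mul (hdS _ _) i1]
        refine (norm_add_le _ _).trans ?_
        rw [norm_mul, norm_mul]
        refine add_le_add (mul_le_of_le_one_right (norm_nonneg _) i2) ?_
        exact (mul_le_of_le_one_left (norm_nonneg _) (cb_norm_le _ _)).trans i3
      have h5 : (∑ j, ‖db (sb ((2 ^ k)⁻¹)) (z - q j)‖) ^ 2 ≤
          N * ∑ j, ‖db (sb ((2 ^ k)⁻¹)) (z - q j)‖ ^ 2 := by
        have := sq_sum_le_card_mul_sum_sq (s := (Finset.univ : Finset (Fin N)))
          (f := fun j => ‖db (sb ((2 ^ k)⁻¹)) (z - q j)‖)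
        simpa using this
      have h6 := pow_le_pow_left₀ (norm_nonneg _) h4 2
      refine h6.trans ?_
      have h7 := add_sq_le (a := ‖db (sb (2 ^ k)) z‖) (b := ∑ j, ‖db (sb ((2 ^ k)⁻¹)) (z - q j)‖)
      linarith
    have hi1 : Integrable (fun z => 2 * ‖db (sb (2 ^ k)) (z - 0)‖ ^ 2) := (hE _ hp 0).1.const_mul 2
    have hi2 : Integrable (fun z => 2 * ((N : ℝ) * ∑ j, ‖db (sb ((2 ^ k)⁻¹)) (z - q j)‖ ^ 2)) :=
      ((integrable_finsetSum _ fun j _ => (hE _ hp' (q j)).1).const_mul _).const_mul 2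
    refine (integral_mono_of_nonneg (ae_of_all _ fun z => by positivity) (hi1.add hi2)
      (ae_of_all _ hpt)).trans ?_
    rw [Pi.add_def, integral_add hi1 hi2, integral_const_mul, integral_const_mul, integral_const_mul,
      integral_finsetSum _ fun j _ => (hE _ hp' (q j)).1]
    have h8 := (hE _ hp 0).2
    have h9 : ∑ j, ∫ z, ‖db (sb ((2 ^ k)⁻¹)) (z - q j)‖ ^ 2 ≤ N * E := by
      have := Finset.sum_le_card_nsmul Finset.univ
        (fun j => ∫ z, ‖db (sb ((2 ^ k)⁻¹)) (z - q j)‖ ^ 2) E (fun j _ => (hE _ hp' (q j)).2)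
      simpa using this
    gcongr

/-- Planar solution on the complex plane. -/
structure CSol {N : ℕ} (q : Fin N → ℂ) (al : Fin N → ℝ) (U : ℂ → ℝ) : Prop where
  reg : ∀ z ∈ (Set.range q)ᶜ, ContDiffAt ℝ 2 (fun z => (U z : ℂ)) z
  pde : ∀ z ∈ (Set.range q)ᶜ, db (dz (fun z => (U z : ℂ))) z = -(1 / 4) * Complex.exp (U z)
  sing : ∀ j, ∃ L : ℝ, Tendsto (fun x => U x - 2 * al j * Real.log ‖x - q j‖)
    (𝓝[≠] (q j)) (𝓝 L)
  inf : ∃ L : ℝ, Tendsto (fun x => U x + 2 * Real.log (1 + ‖x‖ ^ 2)) (Bornology.cobounded ℂ) (𝓝 L)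

lemma isOpen_D {N : ℕ} (q : Fin N → ℂ) : IsOpen (Set.range q)ᶜ :=
  (Set.finite_range q).isClosed.isOpen_compl

lemma eventually_D {N : ℕ} (q : Fin N → ℂ) (p : ℂ) : ∀ᶠ z in 𝓝[≠] p, z ∈ (Set.range q)ᶜ := by
  have h1 : IsClosed (Set.range q \ {p}) := (Set.finite_range q).sdiff.isClosed
  have h2 : (Set.range q \ {p})ᶜ ∈ 𝓝 p := h1.isOpen_compl.mem_nhds (by simp)
  rw [eventually_nhdsWithin_iff]
  filter_upwards [h2] with z hz hzp hzr
  exact hz ⟨hzr, hzp⟩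

lemma eventually_D_inf {N : ℕ} (q : Fin N → ℂ) :
    ∀ᶠ z in Bornology.cobounded ℂ, z ∈ (Set.range q)ᶜ :=
  (Set.finite_range q).isBounded

section
variable {N : ℕ} {q : Fin N → ℂ} {al : Fin N → ℝ} {U : ℂ → ℝ}

/-- The first derivative. -/
def pU (U : ℂ → ℝ) : ℂ → ℂ := dz (fun z => (U z : ℂ))

/-- The Schwarzian type quantity. -/
def QU (U : ℂ → ℝ) (z : ℂ) : ℂ := dz (pU U) z - (1 / 2) * (pU U z * pU U z)

lemma exp_hol_comp {f : ℂ → ℂ} {z : ℂ} (hf : DifferentiableAt ℝ f z) :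
    dz (fun x => Complex.exp (f x)) z = Complex.exp (f z) * dz f z ∧
    db (fun x => Complex.exp (f x)) z = Complex.exp (f z) * db f z :=
  ⟨dz_hol_comp (Complex.hasDerivAt_exp _) hf, db_hol_comp (Complex.hasDerivAt_exp _) hf⟩

lemma contDiffAt_cexp {f : ℂ → ℂ} {z : ℂ} {n : WithTop ℕ∞} (hf : ContDiffAt ℝ n f z) :
    ContDiffAt ℝ n (fun x => Complex.exp (f x)) z :=
  (Complex.contDiff_exp (𝕜 := ℝ)).contDiffAt.comp z hf

lemma CSol.p2 (h : CSol q al U) : ∀ z ∈ (Set.range q)ᶜ, ContDiffAt ℝ 2 (pU U) z := by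
  refine dbar_regularity (isOpen_D q) (h := fun z => -(1 / 4) * Complex.exp (U z))
    (fun z hz => contDiffAt_dz (h.reg z hz) (by norm_num)) (fun z hz => ?_) h.pde
  exact contDiffAt_const.mul (contDiffAt_cexp (h.reg z hz))

lemma CSol.db_U (h : CSol q al U) : ∀ z ∈ (Set.range q)ᶜ,
    db (fun z => (U z : ℂ)) z = (starRingEnd ℂ) (pU U z) := by
  intro z hz
  have := db_conj ((h.reg z hz).differentiableAt (by norm_num))
  simp only [Complex.conj_ofReal] at this
  exact this

lemma CSol.Q1 (h : CSol q al U) : ∀ z ∈ (Set.range q)ᶜ, ContDiffAt ℝ 1 (QU U) z := by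
  intro z hz
  have h2 := h.p2 z hz
  have h1 : ContDiffAt ℝ 1 (pU U) z := h2.of_le (by norm_num)
  exact (contDiffAt_dz h2 (by norm_num)).sub (contDiffAt_const.mul (h1.mul h1))

lemma CSol.db_Q (h : CSol q al U) : ∀ z ∈ (Set.range q)ᶜ, db (QU U) z = 0 := by
  intro z hz
  have h2 := h.p2 z hz
  have d1 : DifferentiableAt ℝ (pU U) z := h2.differentiableAt (by norm_num)
  have d0 : DifferentiableAt ℝ (fun z => (U z : ℂ)) z := (h.reg z hz).differentiableAt (by norm_num)
  have d2 : DifferentiableAt ℝ (dz (pU U)) z :=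
    (contDiffAt_dz (m := 1) h2 (by norm_num)).differentiableAt (by norm_num)
  have e : db (pU U) =ᶠ[𝓝 z] fun x => -(1 / 4) * Complex.exp (U x) := by
    filter_upwards [(isOpen_D q).mem_nhds hz] with x hx
    exact h.pde x hx
  have dexp : DifferentiableAt ℝ (fun x => Complex.exp (U x)) z :=
    (contDiffAt_cexp (h.reg z hz)).differentiableAt (by norm_num)
  have e1 : db (QU U) z = db (dz (pU U)) z - 1 / 2 * (db (pU U) z * pU U z
      + pU U z * db (pU U) z) := by
    unfold QU
    rw [db_sub d2 ((differentiableAt_const _).fun_mul (d1.fun_mul d1)),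
      db_const_mul _ (d1.fun_mul d1), db_mul d1 d1]
  rw [e1, db_dz_comm h2, dz_congr e, dz_const_mul _ dexp, (exp_hol_comp d0).1, e.eq_of_nhds]
  change -(1 / 4) * (Complex.exp (U z) * pU U z) - _ = _
  ring

end

section
variable {N : ℕ} {q : Fin N → ℂ} {al : Fin N → ℝ} {U V : ℂ → ℝ}

/-- the weight -/
def mUV (U V : ℂ → ℝ) (z : ℂ) : ℝ := Real.exp (-(U z + V z) / 2)

/-- the conformal-type field -/
def GUV (U V : ℂ → ℝ) (z : ℂ) : ℂ :=
  (1 / 2) * ((mUV U V z : ℂ) * (starRingEnd ℂ) (pU U z - pU V z))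

lemma mUV_pos (U V : ℂ → ℝ) (z : ℂ) : 0 < mUV U V z := Real.exp_pos _

lemma mUV_cast (U V : ℂ → ℝ) : (fun z => (mUV U V z : ℂ)) =
    fun z => Complex.exp (-(1 / 2) * ((U z : ℂ) + V z)) := by
  funext z
  rw [mUV, Complex.ofReal_exp]
  push_cast
  congr 1
  ring

lemma contDiffAt_conj {f : ℂ → ℂ} {z : ℂ} {n : WithTop ℕ∞} (hf : ContDiffAt ℝ n f z) :
    ContDiffAt ℝ n (fun x => (starRingEnd ℂ) (f x)) z :=
  Complex.conjCLE.contDiff.contDiffAt.comp z hf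

lemma CSol.m2 (hU : CSol q al U) (hV : CSol q al V) : ∀ z ∈ (Set.range q)ᶜ,
    ContDiffAt ℝ 2 (fun z => (mUV U V z : ℂ)) z := by
  intro z hz
  rw [mUV_cast]
  exact contDiffAt_cexp (contDiffAt_const.mul ((hU.reg z hz).add (hV.reg z hz)))

lemma CSol.G1 (hU : CSol q al U) (hV : CSol q al V) : ∀ z ∈ (Set.range q)ᶜ,
    ContDiffAt ℝ 1 (GUV U V) z := by
  intro z hz
  refine contDiffAt_const.mul (((hU.m2 hV z hz).of_le (by norm_num)).mul (contDiffAt_conj ?_))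
  exact ((hU.p2 z hz).sub (hV.p2 z hz)).of_le (by norm_num)

lemma CSol.db_G (hU : CSol q al U) (hV : CSol q al V) : ∀ z ∈ (Set.range q)ᶜ,
    db (GUV U V) z = (1 / 2) * ((mUV U V z : ℂ) * (starRingEnd ℂ) (QU U z - QU V z)) := by
  intro z hz
  have dU : DifferentiableAt ℝ (fun z => (U z : ℂ)) z := (hU.reg z hz).differentiableAt (by norm_num)
  have dV : DifferentiableAt ℝ (fun z => (V z : ℂ)) z := (hV.reg z hz).differentiableAt (by norm_num)
  have dp : DifferentiableAt ℝ (pU U) z := (hU.p2 z hz).differentiableAt (by norm_num)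
  have dp' : DifferentiableAt ℝ (pU V) z := (hV.p2 z hz).differentiableAt (by norm_num)
  have dm : DifferentiableAt ℝ (fun z => (mUV U V z : ℂ)) z :=
    (hU.m2 hV z hz).differentiableAt (by norm_num)
  have dc : DifferentiableAt ℝ (fun x => (starRingEnd ℂ) (pU U x - pU V x)) z :=
    (contDiffAt_conj ((hU.p2 z hz).sub (hV.p2 z hz))).differentiableAt (by norm_num)
  have em : db (fun z => (mUV U V z : ℂ)) z = (mUV U V z : ℂ) *
      (-(1 / 2) * ((starRingEnd ℂ) (pU U z) + (starRingEnd ℂ) (pU V z))) := by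
    have := congrFun (mUV_cast U V) z
    rw [mUV_cast, this, (exp_hol_comp ((differentiableAt_const _).fun_mul (dU.fun_add dV))).2,
      db_const_mul _ (dU.fun_add dV), db_add dU dV, hU.db_U z hz, hV.db_U z hz]
  unfold GUV
  rw [db_const_mul _ (dm.fun_mul dc), db_mul dm dc, db_conj (dp.fun_sub dp'), dz_sub dp dp', em]
  simp only [QU, map_sub, map_mul, map_div₀, map_one, map_ofNat]
  ring

/-- The vanishing step. -/
lemma CSol.Q_eq (hU : CSol q al U) (hV : CSol q al V) {K : ℝ} (hK : 0 < K)
    (hb : ∀ z ∈ (Set.range q)ᶜ, mUV U V z * ‖pU U z - pU V z‖ ^ 2 ≤ K) :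
    ∀ z ∈ (Set.range q)ᶜ, QU U z = QU V z := by
  obtain ⟨C₀, hη⟩ := eta_good q
  have hv := hη.vanish (isOpen_D q) (F := fun z => (QU U z - QU V z) * GUV U V z)
    (Φ := fun z => 1 / 2 * (mUV U V z * ‖QU U z - QU V z‖ ^ 2)) (K := Real.sqrt K)
    (Real.sqrt_pos.2 hK)
    (fun z hz => ((hU.Q1 z hz).sub (hV.Q1 z hz)).mul (hU.G1 hV z hz))
    (by
      intro z hz
      have dQ := (hU.Q1 z hz).differentiableAt (by norm_num)
      have dQ' := (hV.Q1 z hz).differentiableAt (by norm_num)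
      have dG := (hU.G1 hV z hz).differentiableAt (by norm_num)
      rw [db_mul (dQ.fun_sub dQ') dG, db_sub dQ dQ', hU.db_Q z hz, hV.db_Q z hz, hU.db_G hV z hz]
      have := Complex.mul_conj' (QU U z - QU V z)
      push_cast
      linear_combination (1 / 2 * (mUV U V z : ℂ)) * this)
    (by
      intro z hz
      rw [Real.sq_sqrt hK.le, GUV]
      have h1 := hb z hz
      have hm := mUV_pos U V z
      have e : ‖(QU U z - QU V z) * (1 / 2 * ((mUV U V z : ℂ) *
          (starRingEnd ℂ) (pU U z - pU V z)))‖ ^ 2 = ‖QU U z - QU V z‖ ^ 2 * (1 / 4 *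
            (mUV U V z * (mUV U V z * ‖pU U z - pU V z‖ ^ 2))) := by
        rw [norm_mul, norm_mul, norm_mul, RCLike.norm_conj, Complex.norm_real,
          Real.norm_of_nonneg hm.le]
        norm_num
        ring
      rw [e]
      have h2 : mUV U V z * (mUV U V z * ‖pU U z - pU V z‖ ^ 2) ≤ mUV U V z * K := by gcongr
      have h3 : 0 ≤ ‖QU U z - QU V z‖ ^ 2 := by positivity
      have h4 : 0 ≤ mUV U V z * K := by positivity
      nlinarith [mul_le_mul_of_nonneg_left h2 h3, mul_nonneg h3 h4])
  intro z hz
  have h1 := hv z hz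
  have hm := mUV_pos U V z
  have h2 : ‖QU U z - QU V z‖ ^ 2 = 0 := by
    by_contra hn
    have : 0 < ‖QU U z - QU V z‖ ^ 2 := lt_of_le_of_ne (by positivity) (Ne.symm hn)
    have h5 := mul_pos hm this
    linarith
  have h3 : ‖QU U z - QU V z‖ = 0 := by simpa using h2
  exact sub_eq_zero.1 (norm_eq_zero.1 h3)

/-- Gluing local bounds. -/
lemma glue_bound (q : Fin N → ℂ) {g : ℂ → ℝ} (hg : ∀ z ∈ (Set.range q)ᶜ, ContinuousAt g z)
    (hs : ∀ j, ∃ K, ∀ᶠ z in 𝓝[≠] (q j), g z ≤ K)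
    (hi : ∃ K, ∀ᶠ z in Bornology.cobounded ℂ, g z ≤ K) :
    ∃ K, 0 < K ∧ ∀ z ∈ (Set.range q)ᶜ, g z ≤ K := by
  obtain ⟨K₁, h1⟩ := hi
  obtain ⟨R, hR⟩ : ∃ R : ℝ, ∀ z : ℂ, R < ‖z‖ → g z ≤ K₁ := by
    have h2 : Bornology.IsBounded {z | g z ≤ K₁}ᶜ := by
      rw [Bornology.isBounded_def, compl_compl]
      exact h1
    obtain ⟨R, hR⟩ := h2.exists_norm_le
    refine ⟨R, fun z hz => ?_⟩
    by_contra hn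
    have := hR z hn
    linarith
  obtain ⟨K₂, h2⟩ : ∃ K, ∀ z ∈ closedBall (0 : ℂ) R, z ∈ (Set.range q)ᶜ → g z ≤ K := by
    refine (isCompact_closedBall (0 : ℂ) R).induction_on
      (p := fun S => ∃ K, ∀ z ∈ S, z ∈ (Set.range q)ᶜ → g z ≤ K) ⟨0, by simp⟩ ?_ ?_ ?_
    · rintro s t hst ⟨K, hK⟩
      exact ⟨K, fun z hz => hK z (hst hz)⟩
    · rintro s t ⟨K, hK⟩ ⟨K', hK'⟩
      refine ⟨max K K', ?_⟩
      rintro z (hz | hz) hzD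
      · exact (hK z hz hzD).trans (le_max_left _ _)
      · exact (hK' z hz hzD).trans (le_max_right _ _)
    · intro x _
      by_cases hx : x ∈ (Set.range q)ᶜ
      · refine ⟨{z | g z < g x + 1}, mem_nhdsWithin_of_mem_nhds ?_, g x + 1, fun z hz _ => le_of_lt hz⟩
        exact (hg x hx).eventually_lt_const (by linarith)
      · rw [Set.mem_compl_iff, not_not] at hx
        obtain ⟨j, rfl⟩ := hx
        obtain ⟨K, hK⟩ := hs j
        rw [eventually_nhdsWithin_iff] at hK
        refine ⟨_, mem_nhdsWithin_of_mem_nhds hK, K, fun z hz hzD => hz ?_⟩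
        rintro rfl
        exact hzD ⟨j, rfl⟩
  refine ⟨max 1 (max K₁ K₂), by positivity, fun z hz => ?_⟩
  rcases lt_or_ge R ‖z‖ with h | h
  · exact (hR z h).trans ((le_max_left _ _).trans (le_max_right _ _))
  · exact (h2 z (by simpa using h) hz).trans ((le_max_right _ _).trans (le_max_right _ _))

end

section
variable {N : ℕ} {q : Fin N → ℂ} {al : Fin N → ℝ} {U V : ℂ → ℝ}

lemma exp_two_sided {a b L : ℝ} (h1 : L - 1 < a - b) (h2 : a - b < L + 1) :
    Real.exp a ≤ Real.exp (|L| + 1) * Real.exp b ∧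
    Real.exp (-a) ≤ Real.exp (|L| + 1) * Real.exp (-b) := by
  rw [← Real.exp_add, ← Real.exp_add, Real.exp_le_exp, Real.exp_le_exp]
  have h3 := le_abs_self L
  have h4 := neg_abs_le L
  constructor <;> linarith

lemma CSol.exp_sing (h : CSol q al U) (j : Fin N) : ∃ B : ℝ, 0 < B ∧ ∀ᶠ z in 𝓝[≠] (q j),
    Real.exp (U z) ≤ B * ‖z - q j‖ ^ (2 * al j) ∧
    Real.exp (-U z) ≤ B * ‖z - q j‖ ^ (-(2 * al j)) := by
  obtain ⟨L, hL⟩ := h.sing j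
  refine ⟨Real.exp (|L| + 1), Real.exp_pos _, ?_⟩
  filter_upwards [hL.eventually_const_lt (show L - 1 < L by linarith),
    hL.eventually_lt_const (show L < L + 1 by linarith), self_mem_nhdsWithin] with z h1 h2 hz
  have hp : 0 < ‖z - q j‖ := norm_pos_iff.2 (sub_ne_zero.2 hz)
  have := exp_two_sided h1 h2
  rw [Real.rpow_def_of_pos hp, Real.rpow_def_of_pos hp]
  convert this using 4 <;> ring

lemma CSol.exp_inf (h : CSol q al U) : ∃ B : ℝ, 0 < B ∧ ∀ᶠ z in Bornology.cobounded ℂ,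
    Real.exp (U z) ≤ B * ((1 + ‖z‖ ^ 2) ^ 2)⁻¹ ∧
    Real.exp (-U z) ≤ B * (1 + ‖z‖ ^ 2) ^ 2 := by
  obtain ⟨L, hL⟩ := h.inf
  refine ⟨Real.exp (|L| + 1), Real.exp_pos _, ?_⟩
  filter_upwards [hL.eventually_const_lt (show L - 1 < L by linarith),
    hL.eventually_lt_const (show L < L + 1 by linarith)] with z h1 h2
  have hp : 0 < 1 + ‖z‖ ^ 2 := by positivity
  have := exp_two_sided (a := U z) (b := -(2 * Real.log (1 + ‖z‖ ^ 2))) (L := L)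
    (by linarith) (by linarith)
  have e : Real.exp (2 * Real.log (1 + ‖z‖ ^ 2)) = (1 + ‖z‖ ^ 2) ^ 2 := by
    rw [two_mul, Real.exp_add, Real.exp_log hp]
    ring
  rw [neg_neg, Real.exp_neg (2 * _), e] at this
  exact this

lemma mUV_le {B : ℝ} {U V : ℂ → ℝ} {z : ℂ} (hU : Real.exp (-U z) ≤ B) (hV : Real.exp (-V z) ≤ B) :
    mUV U V z ≤ B := by
  have hB : 0 < B := (Real.exp_pos _).trans_le hU
  have h1 := (Real.le_log_iff_exp_le hB).2 hU
  have h2 := (Real.le_log_iff_exp_le hB).2 hV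
  rw [mUV, ← Real.le_log_iff_exp_le hB]
  linarith

lemma CSol.m_sing (hU : CSol q al U) (hV : CSol q al V) (j : Fin N) : ∃ B : ℝ, 0 < B ∧
    ∀ᶠ z in 𝓝[≠] (q j), mUV U V z ≤ B * ‖z - q j‖ ^ (-(2 * al j)) := by
  obtain ⟨B, hB, h1⟩ := hU.exp_sing j
  obtain ⟨B', hB', h2⟩ := hV.exp_sing j
  refine ⟨B + B', by positivity, ?_⟩
  filter_upwards [h1, h2] with z h1 h2
  have : 0 ≤ ‖z - q j‖ ^ (-(2 * al j)) := by positivity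
  refine mUV_le (h1.2.trans ?_) (h2.2.trans ?_) <;> gcongr <;> linarith

lemma CSol.m_inf (hU : CSol q al U) (hV : CSol q al V) : ∃ B : ℝ, 0 < B ∧
    ∀ᶠ z in Bornology.cobounded ℂ, mUV U V z ≤ B * (1 + ‖z‖ ^ 2) ^ 2 := by
  obtain ⟨B, hB, h1⟩ := hU.exp_inf
  obtain ⟨B', hB', h2⟩ := hV.exp_inf
  refine ⟨B + B', by positivity, ?_⟩
  filter_upwards [h1, h2] with z h1 h2
  refine mUV_le (h1.2.trans ?_) (h2.2.trans ?_) <;> gcongr <;> linarith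

/-- the difference -/
def wUV (U V : ℂ → ℝ) (z : ℂ) : ℂ := (U z : ℂ) - V z

lemma CSol.w2 (hU : CSol q al U) (hV : CSol q al V) : ∀ z ∈ (Set.range q)ᶜ,
    ContDiffAt ℝ 2 (wUV U V) z := fun z hz => (hU.reg z hz).sub (hV.reg z hz)

lemma CSol.dz_w (hU : CSol q al U) (hV : CSol q al V) : ∀ z ∈ (Set.range q)ᶜ,
    dz (wUV U V) z = pU U z - pU V z := fun z hz =>
  dz_sub ((hU.reg z hz).differentiableAt (by norm_num)) ((hV.reg z hz).differentiableAt (by norm_num))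

lemma CSol.db_dz_w (hU : CSol q al U) (hV : CSol q al V) : ∀ z ∈ (Set.range q)ᶜ,
    ‖db (dz (wUV U V)) z‖ ≤ Real.exp (U z) + Real.exp (V z) := by
  intro z hz
  have e : dz (wUV U V) =ᶠ[𝓝 z] fun x => pU U x - pU V x := by
    filter_upwards [(isOpen_D q).mem_nhds hz] with x hx
    exact hU.dz_w hV x hx
  have h1 : db (pU U) z = -(1 / 4) * Complex.exp (U z) := hU.pde z hz
  have h2 : db (pU V) z = -(1 / 4) * Complex.exp (V z) := hV.pde z hz
  rw [db_congr e, db_sub ((hU.p2 z hz).differentiableAt (by norm_num))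
    ((hV.p2 z hz).differentiableAt (by norm_num)), h1, h2]
  refine (norm_sub_le _ _).trans ?_
  have e1 := Complex.norm_exp_ofReal (U z)
  have e2 := Complex.norm_exp_ofReal (V z)
  rw [norm_mul, norm_mul, e1, e2]
  norm_num
  linarith [Real.exp_pos (U z), Real.exp_pos (V z)]

lemma CSol.bound_sing (hal : ∀ j, al j ∈ Set.Ioo (-1 : ℝ) 0)
    (hU : CSol q al U) (hV : CSol q al V) (j : Fin N) : ∃ K : ℝ,
    ∀ᶠ z in 𝓝[≠] (q j), mUV U V z * ‖pU U z - pU V z‖ ^ 2 ≤ K := by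
  obtain ⟨L, hL⟩ := hU.sing j
  obtain ⟨L', hL'⟩ := hV.sing j
  obtain ⟨B, hB, h1⟩ := hU.exp_sing j
  obtain ⟨B', hB', h2⟩ := hV.exp_sing j
  obtain ⟨A, hA, h3⟩ := hU.m_sing hV j
  obtain ⟨hj1, hj2⟩ := hal j
  have hw : Tendsto (wUV U V) (𝓝[≠] (q j)) (𝓝 ((L - L' : ℝ) : ℂ)) := by
    have := (Complex.continuous_ofReal.tendsto _).comp (hL.sub hL')
    refine this.congr fun z => ?_
    simp [wUV]
  obtain ⟨C, hC⟩ := grad_bound (w := wUV U V) (a := -(2 * al j)) (C := B + B') (by linarith)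
    (by linarith) hw ((eventually_D q _).mono fun z hz => hU.w2 hV z hz) (by
      filter_upwards [eventually_D q (q j), h1, h2] with z hz h1 h2
      refine (hU.db_dz_w hV z hz).trans ?_
      rw [neg_neg, add_mul]
      exact add_le_add h1.1 h2.1)
  refine ⟨A * C ^ 2, ?_⟩
  filter_upwards [eventually_D q (q j), hC, h3, self_mem_nhdsWithin] with z hz h4 h3 hne
  have hp : 0 < ‖z - q j‖ := norm_pos_iff.2 (sub_ne_zero.2 hne)
  rw [hU.dz_w hV z hz] at h4
  have h5 : ‖pU U z - pU V z‖ ^ 2 ≤ (C * ‖z - q j‖ ^ (-(-(2 * al j) / 2))) ^ 2 := by gcongr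
  calc _ ≤ (A * ‖z - q j‖ ^ (-(2 * al j))) * (C * ‖z - q j‖ ^ (-(-(2 * al j) / 2))) ^ 2 := by
        gcongr
    _ = A * C ^ 2 * (‖z - q j‖ ^ (-(2 * al j)) * (‖z - q j‖ ^ (-(-(2 * al j) / 2)) *
          ‖z - q j‖ ^ (-(-(2 * al j) / 2)))) := by ring
    _ = A * C ^ 2 := by
        rw [← Real.rpow_add hp, ← Real.rpow_add hp]
        ring_nf
        simp

lemma CSol.grad_inf (hU : CSol q al U) (hV : CSol q al V) : ∃ C : ℝ,
    ∀ᶠ z in Bornology.cobounded ℂ, ‖pU U z - pU V z‖ * ‖z‖ ^ 2 ≤ C := by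
  obtain ⟨L, hL⟩ := hU.inf
  obtain ⟨L', hL'⟩ := hV.inf
  obtain ⟨B, hB, h1⟩ := hU.exp_inf
  obtain ⟨B', hB', h2⟩ := hV.exp_inf
  have hinv : Tendsto (fun z : ℂ => z⁻¹) (𝓝[≠] 0) (Bornology.cobounded ℂ) :=
    tendsto_inv₀_nhdsNE_zero
  have hinv' : Tendsto (fun z : ℂ => z⁻¹) (Bornology.cobounded ℂ) (𝓝[≠] 0) :=
    tendsto_inv₀_cobounded'
  have hw : Tendsto (wUV U V) (Bornology.cobounded ℂ) (𝓝 ((L - L' : ℝ) : ℂ)) := by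
    have := (Complex.continuous_ofReal.tendsto _).comp (hL.sub hL')
    refine this.congr fun z => ?_
    simp [wUV]
  have hd : ∀ z : ℂ, z ≠ 0 → HasDerivAt (fun z : ℂ => z⁻¹) (-(z ^ 2)⁻¹) z := fun z hz =>
    hasDerivAt_inv hz
  -- derivative formulas in the inverted coordinate
  have hdz : ∀ z : ℂ, z ≠ 0 → z⁻¹ ∈ (Set.range q)ᶜ →
      dz (fun x => wUV U V x⁻¹) z = -(z ^ 2)⁻¹ * dz (wUV U V) z⁻¹ := fun z hz hz' =>
    dz_comp_hol (hd z hz) ((hU.w2 hV _ hz').differentiableAt (by norm_num))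
  have hev : ∀ᶠ z in 𝓝[≠] (0 : ℂ), z⁻¹ ∈ (Set.range q)ᶜ := hinv.eventually (eventually_D_inf q)
  obtain ⟨C, hC⟩ := grad_bound (w := fun x => wUV U V x⁻¹) (a := 0) (C := B + B') (p := 0) le_rfl
    (by norm_num) (hw.comp hinv) (by
      filter_upwards [hev, self_mem_nhdsWithin] with z hz hz0
      exact (hU.w2 hV _ hz).comp (f := fun x : ℂ => x⁻¹) z (contDiffAt_inv ℝ hz0)) (by
      filter_upwards [hev, self_mem_nhdsWithin, hinv.eventually h1, hinv.eventually h2]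
        with z hz hz0 h1 h2
      have hz0 : z ≠ 0 := hz0
      have e : dz (fun x => wUV U V x⁻¹) =ᶠ[𝓝 z]
          fun x => -(x ^ 2)⁻¹ * dz (wUV U V) x⁻¹ := by
        have c1 : ∀ᶠ x in 𝓝 z, x⁻¹ ∈ (Set.range q)ᶜ :=
          (continuousAt_inv₀ hz0).eventually ((isOpen_D q).mem_nhds hz)
        filter_upwards [c1, isOpen_ne.mem_nhds hz0] with x hx hx0
        exact hdz x hx0 hx
      have dd : DifferentiableAt ℝ (dz (wUV U V)) z⁻¹ :=
        (contDiffAt_dz (m := 1) (hU.w2 hV _ hz) (by norm_num)).differentiableAt (by norm_num)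
      have hol : DifferentiableAt ℂ (fun x : ℂ => -(x ^ 2)⁻¹) z := by
        have : z ^ 2 ≠ 0 := pow_ne_zero _ hz0
        fun_prop (disch := assumption)
      have dd' : DifferentiableAt ℝ (fun x => dz (wUV U V) x⁻¹) z :=
        DifferentiableAt.comp (f := fun x : ℂ => x⁻¹) z dd
          ((hd z hz0).differentiableAt.restrictScalars ℝ)
      rw [db_congr e, db_mul (hol.restrictScalars ℝ) dd', db_of_hol hol,
        db_comp_hol (hd z hz0) dd, zero_mul, zero_add, norm_mul, norm_mul, RCLike.norm_conj,
        norm_neg, norm_inv, norm_pow, neg_zero, Real.rpow_zero, mul_one]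
      have h3 := hU.db_dz_w hV _ hz
      have hp : 0 < ‖z‖ := norm_pos_iff.2 hz0
      have key : (‖z‖ ^ 2)⁻¹ * ((‖z‖ ^ 2)⁻¹ * ((1 + ‖z⁻¹‖ ^ 2) ^ 2)⁻¹) ≤ 1 := by
        rw [norm_inv, ← mul_inv, ← mul_inv]
        refine inv_le_one_of_one_le₀ ?_
        have : ‖z‖ ^ 2 * (‖z‖ ^ 2 * (1 + ‖z‖⁻¹ ^ 2) ^ 2) = (‖z‖ ^ 2 + 1) ^ 2 := by
          field_simp
        rw [this]
        nlinarith [sq_nonneg ‖z‖, sq_nonneg (‖z‖ ^ 2)]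
      calc _ ≤ (‖z‖ ^ 2)⁻¹ * ((‖z‖ ^ 2)⁻¹ * (B * ((1 + ‖z⁻¹‖ ^ 2) ^ 2)⁻¹
            + B' * ((1 + ‖z⁻¹‖ ^ 2) ^ 2)⁻¹)) := by
            gcongr
            exact h3.trans (add_le_add h1.1 h2.1)
        _ = (B + B') * ((‖z‖ ^ 2)⁻¹ * ((‖z‖ ^ 2)⁻¹ * ((1 + ‖z⁻¹‖ ^ 2) ^ 2)⁻¹)) := by ring
        _ ≤ (B + B') * 1 := by gcongr
        _ = _ := by ring)
  refine ⟨C, ?_⟩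
  filter_upwards [hinv'.eventually hC, eventually_D_inf q,
    hinv'.eventually self_mem_nhdsWithin] with z h4 hz hz0
  have hz0 : z⁻¹ ≠ 0 := hz0
  rw [hdz _ hz0 (by rwa [inv_inv]), inv_inv, hU.dz_w hV z hz, neg_mul, norm_neg, norm_mul, norm_inv,
    norm_pow, norm_inv, inv_pow, inv_inv] at h4
  simp only [zero_div, neg_zero, Real.rpow_zero, mul_one] at h4
  linarith

lemma CSol.bound (hal : ∀ j, al j ∈ Set.Ioo (-1 : ℝ) 0)
    (hU : CSol q al U) (hV : CSol q al V) : ∃ K : ℝ, 0 < K ∧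
    ∀ z ∈ (Set.range q)ᶜ, mUV U V z * ‖pU U z - pU V z‖ ^ 2 ≤ K := by
  refine glue_bound q (fun z hz => ?_) (fun j => hU.bound_sing hal hV j) ?_
  · have c1 : ContinuousAt (fun z => (mUV U V z : ℂ)) z := (hU.m2 hV z hz).continuousAt
    have c2 : ContinuousAt (mUV U V) z := by
      have := Complex.continuous_re.continuousAt.comp c1
      exact this
    exact c2.mul ((((hU.p2 z hz).continuousAt).sub ((hV.p2 z hz).continuousAt)).norm.pow 2)
  · obtain ⟨A, hA, h1⟩ := hU.m_inf hV
    obtain ⟨C, h2⟩ := hU.grad_inf hV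
    refine ⟨4 * A * C ^ 2, ?_⟩
    filter_upwards [h1, h2, (Bornology.isBounded_def.1 (isBounded_closedBall (x := (0 : ℂ)) (r := 1)))]
      with z h1 h2 hz
    have hz1 : 1 < ‖z‖ := by simpa using hz
    have h3 : (1 + ‖z‖ ^ 2) ^ 2 ≤ 4 * (‖z‖ ^ 2) ^ 2 := by
      have h5 : 1 ≤ ‖z‖ ^ 2 := one_le_pow₀ hz1.le
      nlinarith
    have h4 : (‖pU U z - pU V z‖ * ‖z‖ ^ 2) ^ 2 ≤ C ^ 2 := by gcongr
    calc _ ≤ A * (4 * (‖z‖ ^ 2) ^ 2) * ‖pU U z - pU V z‖ ^ 2 := by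
          gcongr
          exact h1.trans (by gcongr)
      _ = 4 * A * (‖pU U z - pU V z‖ * ‖z‖ ^ 2) ^ 2 := by ring
      _ ≤ _ := by gcongr

end

lemma factor_zero {f : ℂ → ℂ} (hf : Differentiable ℂ f) {a : ℂ} (ha : f a = 0) :
    ∃ g : ℂ → ℂ, Differentiable ℂ g ∧ ∀ z, f z = (z - a) * g z := by
  refine ⟨dslope f a, ?_, fun z => ?_⟩
  · have := (Complex.differentiableOn_dslope (f := f) (c := a) (s := Set.univ) univ_mem).2
      hf.differentiableOn
    exact differentiableOn_univ.1 this
  · have := sub_smul_dslope f a z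
    rw [ha, sub_zero, smul_eq_mul] at this
    exact this.symm

lemma norm_sub_ge_inf (a : ℂ) : ∀ᶠ z in Bornology.cobounded ℂ, ‖z‖ / 2 ≤ ‖z - a‖ := by
  filter_upwards [tendsto_norm_cobounded_atTop.eventually_ge_atTop (2 * ‖a‖)] with z hz
  have := norm_sub_norm_le z a
  linarith

lemma liouville_three {f : ℂ → ℂ} (hf : Differentiable ℂ f) {a b c : ℂ} (hab : a ≠ b)
    (hac : a ≠ c) (hbc : b ≠ c) (ha : f a = 0) (hb : f b = 0) (hc : f c = 0) {C : ℝ}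
    (hC : ∀ᶠ z in Bornology.cobounded ℂ, ‖f z‖ ≤ C * ‖z‖ ^ 2) : ∀ z, f z = 0 := by
  obtain ⟨g, hg, e1⟩ := factor_zero hf ha
  have gb : g b = 0 := by
    have := e1 b
    rw [hb] at this
    exact (mul_eq_zero.1 this.symm).resolve_left (sub_ne_zero.2 hab.symm)
  have gc : g c = 0 := by
    have := e1 c
    rw [hc] at this
    exact (mul_eq_zero.1 this.symm).resolve_left (sub_ne_zero.2 hac.symm)
  obtain ⟨h, hh, e2⟩ := factor_zero hg gb
  have hc0 : h c = 0 := by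
    have := e2 c
    rw [gc] at this
    exact (mul_eq_zero.1 this.symm).resolve_left (sub_ne_zero.2 hbc.symm)
  obtain ⟨k, hk, e3⟩ := factor_zero hh hc0
  have hlim : Tendsto k (cocompact ℂ) (𝓝 0) := by
    rw [← Metric.cobounded_eq_cocompact]
    refine squeeze_zero_norm' (a := fun z => 8 * C * ‖z‖⁻¹) ?_ ?_
    · filter_upwards [hC, norm_sub_ge_inf a, norm_sub_ge_inf b, norm_sub_ge_inf c,
        tendsto_norm_cobounded_atTop.eventually_gt_atTop 0] with z h1 ha hb hc hp
      rw [e1, e2, e3, norm_mul, norm_mul, norm_mul] at h1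
      have h2 : ‖z‖ / 2 * (‖z‖ / 2 * (‖z‖ / 2 * ‖k z‖)) ≤ C * ‖z‖ ^ 2 := by
        refine le_trans ?_ h1
        gcongr
      have h3 : ‖z‖ ^ 2 * (‖z‖ * ‖k z‖) ≤ ‖z‖ ^ 2 * (8 * C) := by nlinarith
      have h4 := le_of_mul_le_mul_left h3 (by positivity)
      rw [← div_eq_mul_inv, le_div_iff₀ hp]
      linarith
    · have := (tendsto_inv_atTop_zero.comp (tendsto_norm_cobounded_atTop (E := ℂ))).const_mul (8 * C)
      simpa using this
  intro z
  rw [e1, e2, e3, hk.apply_eq_of_tendsto_cocompact z hlim]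
  ring

section
variable {N : ℕ} {q : Fin N → ℂ} {al : Fin N → ℝ} {U V : ℂ → ℝ}

theorem CSol.unique (hN : 3 ≤ N) (hq : Function.Injective q)
    (hal : ∀ j, al j ∈ Set.Ioo (-1 : ℝ) 0)
    (hU : CSol q al U) (hV : CSol q al V) : ∀ z ∈ (Set.range q)ᶜ, U z = V z := by
  classical
  obtain ⟨K, hK, hb⟩ := hU.bound hal hV
  have hQ := hU.Q_eq hV hK hb
  have hol : ∀ z ∈ (Set.range q)ᶜ, DifferentiableAt ℂ (GUV U V) z := by
    intro z hz
    refine hol_of_db ((hU.G1 hV z hz).differentiableAt (by norm_num)) ?_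
    rw [hU.db_G hV z hz, hQ z hz]
    simp
  have hG : ∀ z ∈ (Set.range q)ᶜ, ‖GUV U V z‖ ^ 2 ≤ K * mUV U V z := by
    intro z hz
    have hm := mUV_pos U V z
    have e : ‖GUV U V z‖ ^ 2 = 1 / 4 * (mUV U V z * (mUV U V z * ‖pU U z - pU V z‖ ^ 2)) := by
      rw [GUV, norm_mul, norm_mul, RCLike.norm_conj, Complex.norm_real, Real.norm_of_nonneg hm.le]
      norm_num
      ring
    rw [e]
    have h2 := mul_le_mul_of_nonneg_left (hb z hz) hm.le
    have h4 : 0 ≤ mUV U V z * K := by positivity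
    linarith
  set F : ℂ → ℂ := fun z => if z ∈ Set.range q then 0 else GUV U V z with hFdef
  have hFD : ∀ z ∈ (Set.range q)ᶜ, F z = GUV U V z := fun z hz => if_neg hz
  have hFq : ∀ j, F (q j) = 0 := fun j => if_pos ⟨j, rfl⟩
  have holF : ∀ z ∈ (Set.range q)ᶜ, DifferentiableAt ℂ F z := fun z hz =>
    (hol z hz).congr_of_eventuallyEq (by
      filter_upwards [(isOpen_D q).mem_nhds hz] with x hx
      exact hFD x hx)
  have hF : Differentiable ℂ F := by
    intro z
    by_cases hz : z ∈ (Set.range q)ᶜ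
    · exact holF z hz
    · rw [Set.mem_compl_iff, not_not] at hz
      obtain ⟨j, rfl⟩ := hz
      refine (Complex.analyticAt_of_differentiable_on_punctured_nhds_of_continuousAt
        ((eventually_D q (q j)).mono fun z hz => holF z hz) ?_).differentiableAt
      rw [continuousAt_iff_punctured_nhds, hFq]
      obtain ⟨B, hB, hm⟩ := hU.m_sing hV j
      have ha : 0 < -(2 * al j) := by linarith [(hal j).2]
      have t1 : Tendsto (fun z => K * (B * ‖z - q j‖ ^ (-(2 * al j)))) (𝓝[≠] (q j)) (𝓝 0) := by
        have c : Continuous fun z => K * (B * ‖z - q j‖ ^ (-(2 * al j))) := by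
          refine continuous_const.mul (continuous_const.mul ?_)
          exact (continuous_norm.comp (continuous_id.sub continuous_const)).rpow_const
            fun _ => Or.inr ha.le
        have := (c.tendsto (q j)).mono_left (nhdsWithin_le_nhds (s := {q j}ᶜ))
        simpa [Real.zero_rpow ha.ne'] using this
      have t2 : Tendsto (fun z => ‖F z‖ ^ 2) (𝓝[≠] (q j)) (𝓝 0) := by
        refine squeeze_zero' (Eventually.of_forall fun z => by positivity) ?_ t1
        filter_upwards [hm, eventually_D q (q j)] with z hm hz
        rw [hFD z hz]
        exact (hG z hz).trans (by gcongr)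
      have t3 := t2.sqrt
      rw [tendsto_zero_iff_norm_tendsto_zero]
      simpa [Real.sqrt_sq] using t3
  have hinf : ∃ C : ℝ, ∀ᶠ z in Bornology.cobounded ℂ, ‖F z‖ ≤ C * ‖z‖ ^ 2 := by
    obtain ⟨A, hA, h1⟩ := hU.m_inf hV
    refine ⟨Real.sqrt (4 * K * A), ?_⟩
    filter_upwards [h1, eventually_D_inf q,
      tendsto_norm_cobounded_atTop.eventually_gt_atTop 1] with z h1 hz hz1
    rw [hFD z hz]
    have h5 : 1 ≤ ‖z‖ ^ 2 := one_le_pow₀ hz1.le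
    have h3 : (1 + ‖z‖ ^ 2) ^ 2 ≤ 4 * (‖z‖ ^ 2) ^ 2 := by nlinarith
    refine le_of_sq_le_sq ?_ (by positivity)
    rw [mul_pow, Real.sq_sqrt (by positivity)]
    calc _ ≤ K * (A * (4 * (‖z‖ ^ 2) ^ 2)) := by
          refine (hG z hz).trans ?_
          gcongr
          exact h1.trans (by gcongr)
      _ = _ := by ring
  obtain ⟨C, hC⟩ := hinf
  have hzero := liouville_three hF (a := q ⟨0, by omega⟩) (b := q ⟨1, by omega⟩)
    (c := q ⟨2, by omega⟩) (hq.ne (by simp)) (hq.ne (by simp)) (hq.ne (by simp))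
    (hFq _) (hFq _) (hFq _) hC
  have hp : ∀ z ∈ (Set.range q)ᶜ, pU U z = pU V z := by
    intro z hz
    have h1 := hzero z
    rw [hFD z hz, GUV] at h1
    have hm : (mUV U V z : ℂ) ≠ 0 := by exact_mod_cast (mUV_pos U V z).ne'
    have h2 : (starRingEnd ℂ) (pU U z - pU V z) = 0 := by
      simpa [hm] using h1
    exact sub_eq_zero.1 ((map_eq_zero _).1 h2)
  intro z hz
  have e : pU U =ᶠ[𝓝 z] pU V := by
    filter_upwards [(isOpen_D q).mem_nhds hz] with x hx
    exact hp x hx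
  have h1 : db (pU U) z = -(1 / 4) * Complex.exp (U z) := hU.pde z hz
  have h2 : db (pU V) z = -(1 / 4) * Complex.exp (V z) := hV.pde z hz
  rw [db_congr e, h2] at h1
  have h3 : Complex.exp (V z) = Complex.exp (U z) := by linear_combination (-4) * h1
  rw [← Complex.ofReal_exp, ← Complex.ofReal_exp, Complex.ofReal_inj] at h3
  exact (Real.exp_injective h3).symm

end

/-- The isometry between the complex plane and `ℝ²`. -/
def eC : ℂ ≃ₗᵢ[ℝ] Pl := Complex.orthonormalBasisOneI.repr

lemma eC_one : eC 1 = EuclideanSpace.single 0 1 := by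
  ext i
  fin_cases i <;> simp [eC]

lemma eC_I : eC Complex.I = EuclideanSpace.single 1 1 := by
  ext i
  fin_cases i <;> simp [eC]

lemma fderiv_pull {u : Pl → ℝ} {z : ℂ} (hu : DifferentiableAt ℝ u (eC z)) (h : ℂ) :
    fderiv ℝ (fun z => (u (eC z) : ℂ)) z h = ((fderiv ℝ u (eC z) (eC h) : ℝ) : ℂ) := by
  have h1 : HasFDerivAt (fun z => eC z) (eC.toContinuousLinearEquiv : ℂ →L[ℝ] Pl) z :=
    eC.toContinuousLinearEquiv.hasFDerivAt
  have h2 := hu.hasFDerivAt.comp z h1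
  have h3 := (Complex.ofRealCLM.hasFDerivAt (x := u (eC z))).comp z h2
  have h4 : fderiv ℝ (fun z => (u (eC z) : ℂ)) z = _ := h3.fderiv
  rw [h4]
  rfl

lemma fderiv2_pull {u : Pl → ℝ} {z : ℂ} (hu : ContDiffAt ℝ 2 u (eC z)) (h : ℂ) :
    fderiv ℝ (fun y => fderiv ℝ (fun z => (u (eC z) : ℂ)) y h) z h =
      ((fderiv ℝ (fun y => fderiv ℝ u y (eC h)) (eC z) (eC h) : ℝ) : ℂ) := by
  have hc : ∀ᶠ x in 𝓝 (eC z), ContDiffAt ℝ 2 u x := hu.eventually (by simp)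
  have hc' : ∀ᶠ y in 𝓝 z, ContDiffAt ℝ 2 u (eC y) := eC.continuous.continuousAt.eventually hc
  have e : (fun y => fderiv ℝ (fun z => (u (eC z) : ℂ)) y h) =ᶠ[𝓝 z]
      fun y => (((fun x => fderiv ℝ u x (eC h)) (eC y) : ℝ) : ℂ) := by
    filter_upwards [hc'] with y hy
    exact fderiv_pull (hy.differentiableAt (by norm_num)) h
  rw [e.fderiv_eq]
  refine fderiv_pull (u := fun x => fderiv ℝ u x (eC h)) ?_ h
  have h1 : ContDiffAt ℝ 1 (fderiv ℝ u) (eC z) := hu.fderiv_right (by norm_num)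
  exact (h1.differentiableAt (by norm_num)).clm_apply (differentiableAt_const _)

lemma PolySol.toCSol {N : ℕ} {q : Fin N → Pl} {al : Fin N → ℝ} {ρ : ℝ} {u : Pl → ℝ}
    (h : PolySol N q al ρ u) : CSol (fun j => eC.symm (q j)) al (fun z => u (eC z)) := by
  obtain ⟨hr, hp, hs, -, hi⟩ := h
  have hmem : ∀ z, z ∈ (Set.range fun j => eC.symm (q j))ᶜ → eC z ∉ Set.range q := by
    rintro z hz ⟨j, hj⟩
    exact hz ⟨j, by simp [hj]⟩
  have ho : IsOpen (Set.range q)ᶜ := (Set.finite_range q).isClosed.isOpen_compl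
  have hreg : ∀ z ∈ (Set.range fun j => eC.symm (q j))ᶜ, ContDiffAt ℝ 2 u (eC z) := fun z hz =>
    (hr (eC z) (hmem z hz)).contDiffAt (ho.mem_nhds (hmem z hz))
  have hregc : ∀ z ∈ (Set.range fun j => eC.symm (q j))ᶜ,
      ContDiffAt ℝ 2 (fun z => (u (eC z) : ℂ)) z := by
    intro z hz
    have h1 : ContDiffAt ℝ 2 (fun z => eC z) z :=
      eC.toContinuousLinearEquiv.contDiff.contDiffAt
    have h2 : ContDiffAt ℝ 2 (fun z => u (eC z)) z := ContDiffAt.comp z (hreg z hz) h1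
    exact Complex.ofRealCLM.contDiff.contDiffAt.comp z h2
  refine ⟨hregc, fun z hz => ?_, fun j => ?_, ?_⟩
  · rw [db_dz_eq_lap (hregc z hz), fderiv2_pull (hreg z hz), fderiv2_pull (hreg z hz), eC_one, eC_I]
    have h1 := hp _ (hmem z hz)
    rw [lap, Fin.sum_univ_two] at h1
    rw [← Complex.ofReal_exp, ← Complex.ofReal_add, eq_neg_of_add_eq_zero_left h1]
    push_cast
    ring
  · obtain ⟨L, hL⟩ := hs j
    refine ⟨L, ?_⟩
    have ht : Tendsto (fun z => eC z) (𝓝[≠] (eC.symm (q j))) (𝓝[(Set.range q)ᶜ] (q j)) := by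
      refine tendsto_nhdsWithin_iff.2 ⟨?_, ?_⟩
      · have := (eC.continuous.tendsto (eC.symm (q j))).mono_left
          (nhdsWithin_le_nhds (s := {eC.symm (q j)}ᶜ))
        simpa using this
      · filter_upwards [eventually_D (fun j => eC.symm (q j)) (eC.symm (q j))] with z hz
        exact hmem z hz
    refine (hL.comp ht).congr fun z => ?_
    have : ‖eC z - q j‖ = ‖z - eC.symm (q j)‖ := by
      rw [← eC.norm_map (z - eC.symm (q j)), map_sub, LinearIsometryEquiv.apply_symm_apply]
    simp only [Function.comp, this]
  · obtain ⟨L, hL⟩ := hi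
    refine ⟨L, ?_⟩
    have ht : Tendsto (fun z => eC z) (Bornology.cobounded ℂ) (Bornology.cobounded Pl) := by
      rw [← tendsto_norm_atTop_iff_cobounded]
      simpa using tendsto_norm_cobounded_atTop (E := ℂ)
    refine (hL.comp ht).congr fun z => ?_
    simp only [Function.comp, LinearIsometryEquiv.norm_map]

/-- Uniqueness of spherical convex polytopes, planar form (Theorem 1.7(ii)). -/
theorem uniqueness_convex_polytopes (N : ℕ) (hN : 3 ≤ N) (q : Fin N → Pl)
    (hq : Function.Injective q) (al : Fin N → ℝ)
    (hal : ∀ j, al j ∈ Set.Ioo (-1 : ℝ) 0) (hsum : -2 < ∑ j, al j)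
    (ρ : ℝ) (hρ : ρ = 4*π*(2 + ∑ j, al j))
    (u1 u2 : Pl → ℝ) (h1 : PolySol N q al ρ u1) (h2 : PolySol N q al ρ u2) :
    Set.EqOn u1 u2 (Set.range q)ᶜ := by
  intro x hx
  have := h1.toCSol.unique hN (eC.symm.injective.comp hq) hal h2.toCSol (eC.symm x) (by
    rintro ⟨j, hj⟩
    exact hx ⟨j, eC.symm.injective hj⟩)
  simpa using this
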